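/- arXiv:1902.08393 — 2 statements merged into one kernel-verified Lean document; each statement's English description precedes it below -/
import Mathlib

section
/- Let ϑ₁, ϑ₂ be Beurling weights on ℝ^d with ϑ₁ satisfying the Beurling–Domar condition, and let 1 ≤ p, q, r < ∞. Then A^{p,1,q,r}_{ϑ₁,ϑ₂}(ℝ^d) admits an approximate unit with compactly supported Fourier transforms: for every f ∈ A^{p,1,q,r}_{ϑ₁,ϑ₂}(ℝ^d) and every ε > 0 there exists h ∈ A^{p,1,q,r}_{ϑ₁,ϑ₂}(ℝ^d) such that the Fourier transform ĥ has compact support and ‖h∗f − f‖_A < ε. -/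
open MeasureTheory Filter Topology
open scoped ENNReal NNReal BigOperators

noncomputable section

/-- The unit cube `α + [0,1)^d` at the integer point `α ∈ ℤ^d`. -/
def cube {d : ℕ} (α : Fin d → ℤ) : Set (Fin d → ℝ) :=
  Set.univ.pi fun i => Set.Ico (α i : ℝ) ((α i : ℝ) + 1)

/-- The weighted amalgam norm `‖f‖_{pq,ω}` of the space `(L^p_ω, ℓ^q)`. -/
def amalgamNorm {d : ℕ} (p q : ℝ) (ω : (Fin d → ℝ) → ℝ) (f : (Fin d → ℝ) → ℂ) : ℝ≥0∞ :=
  (∑' α : Fin d → ℤ,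
      (eLpNorm (fun x => ω x • f x) (ENNReal.ofReal p) (volume.restrict (cube α))) ^ q) ^ (1 / q)

/-- Membership in the weighted amalgam space `(L^p_ω, ℓ^q)`. -/
def MemAmalgam {d : ℕ} (p q : ℝ) (ω : (Fin d → ℝ) → ℝ) (f : (Fin d → ℝ) → ℂ) : Prop :=
  Measurable f ∧ amalgamNorm p q ω f < ⊤

/-- A Beurling weight: measurable, `ϑ ≥ 1` and submultiplicative. -/
def IsBeurling {d : ℕ} (ϑ : (Fin d → ℝ) → ℝ) : Prop :=
  Measurable ϑ ∧ (∀ x, 1 ≤ ϑ x) ∧ ∀ x y, ϑ (x + y) ≤ ϑ x * ϑ y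

/-- The Fourier transform `f̂(ξ) = ∫ f(x) e^{-2πi⟨x,ξ⟩} dx`. -/
def fourierT {d : ℕ} (f : (Fin d → ℝ) → ℂ) (ξ : Fin d → ℝ) : ℂ :=
  ∫ x : Fin d → ℝ,
    Complex.exp (-(2 * (Real.pi : ℂ) * Complex.I * ∑ i, (x i : ℂ) * (ξ i : ℂ))) * f x

/-- The norm of `A^{p,1,q,r}_{ϑ₁,ϑ₂}(ℝ^d)`. -/
def ANorm {d : ℕ} (p q r : ℝ) (ϑ₁ ϑ₂ : (Fin d → ℝ) → ℝ) (f : (Fin d → ℝ) → ℂ) : ℝ≥0∞ :=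
  amalgamNorm p 1 ϑ₁ f + amalgamNorm q r ϑ₂ (fourierT f)

/-- Membership in `A^{p,1,q,r}_{ϑ₁,ϑ₂}(ℝ^d)`. -/
def MemA {d : ℕ} (p q r : ℝ) (ϑ₁ ϑ₂ : (Fin d → ℝ) → ℝ) (f : (Fin d → ℝ) → ℂ) : Prop :=
  MemAmalgam p 1 ϑ₁ f ∧ MemAmalgam q r ϑ₂ (fourierT f)

/-- Convolution `(f∗g)(x) = ∫ f(x−t)g(t) dt`. -/
def convF {d : ℕ} (f g : (Fin d → ℝ) → ℂ) (x : Fin d → ℝ) : ℂ :=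
  ∫ t : Fin d → ℝ, f (x - t) * g t

/-- `ϑ ≺ ϑ'` : domination of weights up to a constant. -/
def Prec {d : ℕ} (ϑ ϑ' : (Fin d → ℝ) → ℝ) : Prop :=
  ∃ C : ℝ, 0 < C ∧ ∀ x, ϑ x ≤ C * ϑ' x

/-- The Beurling–Domar condition `∑_{n≥1} log ϑ(nx)/n² < ∞`. -/
def BeurlingDomar {d : ℕ} (ϑ : (Fin d → ℝ) → ℝ) : Prop :=
  ∀ x : Fin d → ℝ, Summable fun n : ℕ => Real.log (ϑ ((n : ℝ) • x)) / (n : ℝ) ^ 2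

/-- `w` does not tend to zero as `|x| → ∞`. -/
def NotVanishingAtInfty {d : ℕ} (w : (Fin d → ℝ) → ℝ) : Prop :=
  ∃ δ : ℝ, 0 < δ ∧ ∀ R : ℝ, 0 < R → ∃ x : Fin d → ℝ, R < ‖x‖ ∧ δ ≤ w x

end

/-- One-dimensional Fourier transform. -/
noncomputable def ft1 (h : ℝ → ℂ) (ξ : ℝ) : ℂ :=
  ∫ x : ℝ, Complex.exp (-(2 * (Real.pi : ℂ) * Complex.I * ((x : ℂ) * (ξ : ℂ)))) * h x

lemma sinc_eq_avg (y : ℝ) :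
    ((Real.sinc y : ℝ) : ℂ) = (1 / 2) * ∫ s in (-1:ℝ)..1, Complex.exp (((y * s : ℝ) : ℂ) * Complex.I) := by
  by_cases hy : y = 0
  · simp [hy]; norm_num
  · rw [intervalIntegral.integral_comp_mul_left (fun t : ℝ => Complex.exp ((t : ℂ) * Complex.I)) hy]
    have := integral_exp_mul_I_eq_sinc y
    simp only [mul_neg, mul_one]
    rw [this]
    have hy' : (y : ℂ) ≠ 0 := by exact_mod_cast hy
    rw [Complex.real_smul]
    push_cast
    field_simp

lemma norm_cexp_ft1 (x ξ : ℝ) :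
    ‖Complex.exp (-(2 * (Real.pi : ℂ) * Complex.I * ((x : ℂ) * (ξ : ℂ))))‖ = 1 := by
  have : (-(2 * (Real.pi : ℂ) * Complex.I * ((x : ℂ) * (ξ : ℂ)))) =
      ((-(2 * Real.pi * (x * ξ)) : ℝ) : ℂ) * Complex.I := by
    push_cast; ring
  rw [this, Complex.norm_exp_ofReal_mul_I]

lemma ft1_sinc_mul (g : ℝ → ℂ) (hg : Integrable g) (ε : ℝ) (hε : 0 < ε) (ξ0 : ℝ) (c : ℂ)
    (hc : ∀ ξ, |ξ - ξ0| ≤ ε → ft1 g ξ = c) :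
    ft1 (fun x => ((Real.sinc (ε * x) : ℝ) : ℂ) * g x) ξ0 = c := by
  have hpi := Real.pi_pos
  let F : ℝ → ℝ → ℂ := fun x s =>
    Complex.exp (-(2 * (Real.pi : ℂ) * Complex.I * ((x : ℂ) * ((ξ0 - s * ε / (2 * Real.pi) : ℝ) : ℂ)))) * g x
  have h1 : ∀ x : ℝ, Complex.exp (-(2 * (Real.pi : ℂ) * Complex.I * ((x : ℂ) * (ξ0 : ℂ)))) *
      (((Real.sinc (ε * x) : ℝ) : ℂ) * g x) = (1 / 2) * ∫ s in Set.Ioc (-1:ℝ) 1, F x s := by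
    intro x
    rw [sinc_eq_avg, intervalIntegral.integral_of_le (by norm_num)]
    rw [mul_assoc (1 / 2 : ℂ) _ (g x), ← integral_mul_const, mul_left_comm, ← integral_const_mul]
    congr 1
    apply integral_congr_ae
    filter_upwards with s
    simp only [F]
    rw [← mul_assoc, ← Complex.exp_add]
    congr 2
    have hp : (Real.pi : ℂ) ≠ 0 := by exact_mod_cast hpi.ne'
    push_cast
    field_simp
    ring
  unfold ft1
  simp_rw [h1]
  rw [integral_const_mul, integral_integral_swap]
  · have h2 : ∀ s ∈ Set.Ioc (-1:ℝ) 1, ∫ x, F x s = c := by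
      intro s hs
      apply hc
      have : ξ0 - s * ε / (2 * Real.pi) - ξ0 = -(s * (ε / (2 * Real.pi))) := by ring
      rw [this, abs_neg, abs_mul]
      have h3 : |s| ≤ 1 := abs_le.2 ⟨hs.1.le, hs.2⟩
      have h4 : |ε / (2 * Real.pi)| ≤ ε := by
        rw [abs_of_pos (by positivity)]
        apply div_le_self hε.le
        have := Real.pi_gt_three
        linarith
      calc |s| * |ε / (2 * Real.pi)| ≤ 1 * ε := by gcongr
        _ = ε := one_mul _
    rw [setIntegral_congr_fun measurableSet_Ioc h2]
    simp
    norm_num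
    ring
  · have hb : Integrable (fun z : ℝ × ℝ => g z.1 * (1 : ℂ))
        (volume.prod (volume.restrict (Set.Ioc (-1:ℝ) 1))) :=
      hg.mul_prod (integrable_const (1 : ℂ))
    simp only [mul_one] at hb
    apply Integrable.bdd_mul (c := 1) hb
    · apply Continuous.aestronglyMeasurable
      fun_prop
    · filter_upwards with z
      exact (norm_cexp_ft1 _ _).le

/-- invariant: integrable, transform equal to one on `[-a,a]` and zero beyond `b`. -/
def FtInv (g : ℝ → ℂ) (a b : ℝ) : Prop :=
  Integrable g ∧ (∀ ξ, |ξ| ≤ a → ft1 g ξ = 1) ∧ (∀ ξ, b ≤ |ξ| → ft1 g ξ = 0)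

lemma FtInv.sinc {g : ℝ → ℂ} {a b : ℝ} (h : FtInv g a b) (ε : ℝ) (hε : 0 < ε) :
    FtInv (fun x => ((Real.sinc (ε * x) : ℝ) : ℂ) * g x) (a - ε) (b + ε) := by
  obtain ⟨h1, h2, h3⟩ := h
  refine ⟨?_, ?_, ?_⟩
  · apply Integrable.bdd_mul (c := 1) h1
    · apply Continuous.aestronglyMeasurable
      have := Real.continuous_sinc
      fun_prop
    · filter_upwards with z
      rw [Complex.norm_real]
      exact Real.abs_sinc_le_one _
  · intro ξ hξ
    apply ft1_sinc_mul g h1 ε hε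
    intro ξ' hh
    apply h2
    have := abs_sub_abs_le_abs_sub ξ' ξ
    linarith
  · intro ξ hξ
    apply ft1_sinc_mul g h1 ε hε
    intro ξ' hh
    apply h3
    have := abs_sub_abs_le_abs_sub ξ ξ'
    rw [abs_sub_comm] at this
    linarith

lemma FtInv.sinc_pow {g : ℝ → ℂ} {a b : ℝ} (h : FtInv g a b) (ε : ℝ) (hε : 0 < ε) (m : ℕ) :
    FtInv (fun x => ((Real.sinc (ε * x) ^ m : ℝ) : ℂ) * g x) (a - m * ε) (b + m * ε) := by
  induction m with
  | zero => simpa using h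
  | succ k ih =>
    have := ih.sinc ε hε
    convert this using 1
    · ext x; push_cast; ring
    · push_cast; ring
    · push_cast; ring

lemma FtInv.prod {g : ℝ → ℂ} {a b : ℝ} (h : FtInv g a b) (e : ℕ → ℝ) (he : ∀ j, 0 < e j)
    (m : ℕ → ℕ) (N : ℕ) :
    FtInv (fun x => ((∏ j ∈ Finset.range N, Real.sinc (e j * x) ^ (m j) : ℝ) : ℂ) * g x)
      (a - ∑ j ∈ Finset.range N, m j * e j) (b + ∑ j ∈ Finset.range N, m j * e j) := by
  induction N with
  | zero => simpa using h
  | succ k ih =>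
    have := ih.sinc_pow (e k) (he k) (m k)
    convert this using 1
    · ext x; rw [Finset.prod_range_succ]; push_cast; ring
    · rw [Finset.sum_range_succ]; ring
    · rw [Finset.sum_range_succ]; ring

lemma exists_base (a : ℝ) (ha : 0 < a) : ∃ g : ℝ → ℂ, ∃ C : ℝ, Measurable g ∧ FtInv g a (a + 1) ∧
    0 < C ∧ ∀ x, ‖g x‖ ≤ C / (1 + x ^ 2) := by
  let ψ : ContDiffBump (0 : ℝ) := ⟨a, a + 1, ha, by linarith⟩
  have hcs : HasCompactSupport (fun x => ((ψ x : ℝ) : ℂ)) :=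
    ψ.hasCompactSupport.comp_left (g := fun y : ℝ => (y : ℂ)) (by simp)
  have hcd : ContDiff ℝ (((⊤ : ℕ∞) : WithTop ℕ∞)) (fun x => ((ψ x : ℝ) : ℂ)) :=
    Complex.ofRealCLM.contDiff.comp ψ.contDiff
  let Ψ : SchwartzMap ℝ ℂ := hcs.toSchwartzMap hcd
  let g : SchwartzMap ℝ ℂ := FourierTransformInv.fourierInv Ψ
  have hg : ∀ ξ, ft1 g ξ = (ψ ξ : ℂ) := by
    intro ξ
    have h1 : FourierTransform.fourier g = Ψ := FourierTransform.fourier_fourierInv_eq Ψ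
    have h2 : FourierTransform.fourier (g : ℝ → ℂ) ξ = (ψ ξ : ℂ) := by
      rw [← SchwartzMap.fourier_coe, h1]; rfl
    rw [← h2, Real.fourier_real_eq_integral_exp_smul]
    unfold ft1
    apply integral_congr_ae
    filter_upwards with x
    rw [smul_eq_mul]
    congr 2
    push_cast; ring
  obtain ⟨C0, hC0, h0⟩ := g.decay 0 0
  obtain ⟨C2, hC2, h2⟩ := g.decay 2 0
  refine ⟨g, C0 + C2, g.continuous.measurable, ⟨g.integrable, ?_, ?_⟩, by positivity, ?_⟩
  · intro ξ hξ
    rw [hg, ψ.one_of_mem_closedBall]; · simp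
    simpa [ψ] using hξ
  · intro ξ hξ
    rw [hg, ψ.zero_of_le_dist]; · simp
    simpa [ψ] using hξ
  · intro x
    have a0 := h0 x
    have a2 := h2 x
    simp only [norm_iteratedFDeriv_zero, pow_zero, one_mul, Real.norm_eq_abs, sq_abs] at a0 a2
    rw [le_div_iff₀ (by positivity)]
    linarith

lemma exists_h1 (B : ℕ → ℝ) (hB : ∀ j, 0 ≤ B j) (hs : Summable fun j => B j / 2 ^ j) :
    ∃ h : ℝ → ℂ, ∃ C R : ℝ, Measurable h ∧ FtInv h 1 R ∧ 0 < C ∧ (∀ x, ‖h x‖ ≤ C / (1 + x ^ 2)) ∧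
     ∀ j : ℕ, ∀ x, 2 ^ j ≤ |x| → ‖h x‖ * Real.exp (B (j + 1)) ≤ C / (1 + x ^ 2) := by
  let m : ℕ → ℕ := fun j => 2 * ⌈B (j + 1)⌉₊
  let e : ℕ → ℝ := fun j => 3 / 2 ^ j
  have he : ∀ j, 0 < e j := fun j => by positivity
  have hsum : Summable fun j => (m j : ℝ) * e j := by
    have hs1 : Summable fun j => B (j + 1) / 2 ^ (j + 1) := (summable_nat_add_iff 1).2 hs
    have hs2 : Summable fun j : ℕ => (1 / 2 : ℝ) ^ j := summable_geometric_two
    refine Summable.of_nonneg_of_le (fun j => by positivity) (fun j => ?_)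
      ((hs1.mul_left 12).add (hs2.mul_left 6))
    have := (Nat.ceil_lt_add_one (hB (j + 1))).le
    simp only [m, e]
    push_cast
    rw [pow_succ, one_div, inv_pow]
    have h2 : (0:ℝ) < 2 ^ j := by positivity
    calc 2 * (⌈B (j + 1)⌉₊ : ℝ) * (3 / 2 ^ j) ≤ 2 * (B (j + 1) + 1) * (3 / 2 ^ j) := by gcongr
      _ = _ := by field_simp; ring
  set T := ∑' j, (m j : ℝ) * e j with hT
  have hTle : ∀ N, ∑ j ∈ Finset.range N, (m j : ℝ) * e j ≤ T := fun N =>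
    hsum.sum_le_tsum _ (fun j _ => by have := he j; positivity)
  have hT0 : 0 ≤ T := by simpa using hTle 0
  obtain ⟨g, C, hgm, hg, hC, hgd⟩ := exists_base (T + 1) (by linarith)
  let P : ℕ → ℝ → ℝ := fun N x => ∏ j ∈ Finset.range N, Real.sinc (e j * x) ^ (m j)
  have hfac0 : ∀ j x, 0 ≤ Real.sinc (e j * x) ^ (m j) := fun j x => by
    simp only [m]; rw [pow_mul]; positivity
  have hfac1 : ∀ j x, Real.sinc (e j * x) ^ (m j) ≤ 1 := fun j x => by
    simp only [m]; rw [pow_mul, ← sq_abs]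
    exact pow_le_one₀ (by positivity) (pow_le_one₀ (abs_nonneg _) (Real.abs_sinc_le_one _))
  have hP0 : ∀ N x, 0 ≤ P N x := fun N x => Finset.prod_nonneg fun j _ => hfac0 j x
  have hanti : ∀ x, Antitone fun N => P N x := fun x => antitone_nat_of_succ_le fun N => by
    simp only [P]; rw [Finset.prod_range_succ]
    exact mul_le_of_le_one_right (hP0 N x) (hfac1 N x)
  have hP1 : ∀ N x, P N x ≤ 1 := fun N x => by simpa [P] using hanti x (Nat.zero_le N)
  have hbdd : ∀ x, BddBelow (Set.range fun N => P N x) := fun x => ⟨0, by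
    rintro _ ⟨N, rfl⟩; exact hP0 N x⟩
  let Q : ℝ → ℝ := fun x => ⨅ N, P N x
  have hQ : ∀ x, Tendsto (fun N => P N x) atTop (𝓝 (Q x)) := fun x =>
    tendsto_atTop_ciInf (hanti x) (hbdd x)
  have hQ0 : ∀ x, 0 ≤ Q x := fun x => le_ciInf fun N => hP0 N x
  have hQle : ∀ N x, Q x ≤ P N x := fun N x => ciInf_le (hbdd x) N
  have hPm : ∀ N, Measurable (P N) := fun N => by
    have := Real.continuous_sinc
    have : Continuous (P N) := by simp only [P]; fun_prop
    exact this.measurable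
  have hQm : Measurable Q := measurable_of_tendsto_metrizable hPm (tendsto_pi_nhds.2 hQ)
  have hinv : ∀ N, FtInv (fun x => ((P N x : ℝ) : ℂ) * g x) 1 (T + 1 + 1 + T) := by
    intro N
    obtain ⟨a1, a2, a3⟩ := hg.prod e he m N
    have := hTle N
    exact ⟨a1, fun ξ h => a2 ξ (by linarith), fun ξ h => a3 ξ (by linarith)⟩
  have hn : ∀ x, ‖((Q x : ℝ) : ℂ) * g x‖ = Q x * ‖g x‖ := fun x => by
    rw [norm_mul, Complex.norm_real, Real.norm_of_nonneg (hQ0 x)]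
  have hm : Measurable fun x => ((Q x : ℝ) : ℂ) * g x := by fun_prop
  have hlim : ∀ ξ, Tendsto (fun N => ft1 (fun x => ((P N x : ℝ) : ℂ) * g x) ξ) atTop
      (𝓝 (ft1 (fun x => ((Q x : ℝ) : ℂ) * g x) ξ)) := by
    intro ξ
    unfold ft1
    apply tendsto_integral_of_dominated_convergence (fun x => ‖g x‖)
    · intro N
      have := hPm N
      apply Measurable.aestronglyMeasurable
      fun_prop
    · exact hg.1.norm
    · intro N
      filter_upwards with x
      rw [norm_mul, norm_cexp_ft1, one_mul, norm_mul, Complex.norm_real, Real.norm_of_nonneg (hP0 N x)]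
      exact mul_le_of_le_one_left (norm_nonneg _) (hP1 N x)
    · filter_upwards with x
      apply Tendsto.const_mul
      apply Tendsto.mul_const
      exact (Complex.continuous_ofReal.tendsto _).comp (hQ x)
  have hle : ∀ x, Q x * ‖g x‖ ≤ ‖g x‖ := fun x =>
    mul_le_of_le_one_left (norm_nonneg _) ((hQle 0 x).trans (hP1 0 x))
  refine ⟨fun x => ((Q x : ℝ) : ℂ) * g x, C, T + 1 + 1 + T, hm, ⟨?_, ?_, ?_⟩, hC, ?_, ?_⟩
  · refine hg.1.mono hm.aestronglyMeasurable ?_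
    filter_upwards with x
    rw [hn]; exact hle x
  · intro ξ hξ
    refine tendsto_nhds_unique (hlim ξ) ?_
    simp_rw [fun N => (hinv N).2.1 ξ hξ]
    exact tendsto_const_nhds
  · intro ξ hξ
    refine tendsto_nhds_unique (hlim ξ) ?_
    simp_rw [fun N => (hinv N).2.2 ξ hξ]
    exact tendsto_const_nhds
  · intro x
    rw [hn]; exact (hle x).trans (hgd x)
  · intro j x hx
    rw [hn]
    have hx0 : (0:ℝ) < |x| := lt_of_lt_of_le (by positivity) hx
    have h3 : 3 ≤ |e j * x| := by
      rw [abs_mul, abs_of_pos (he j)]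
      simp only [e]
      rw [div_mul_eq_mul_div, le_div_iff₀ (by positivity)]
      gcongr
    have hsinc : Real.sinc (e j * x) ^ 2 ≤ Real.exp (-1) := by
      have hne : e j * x ≠ 0 := by intro h; rw [h] at h3; simp at h3; linarith
      rw [Real.sinc_of_ne_zero hne, div_pow, ← sq_abs (e j * x)]
      have e1 := Real.sin_sq_le_one (e j * x)
      have e2 : Real.exp 1 < 3 := by have := Real.exp_one_lt_d9; linarith
      rw [Real.exp_neg, div_le_iff₀ (by positivity), inv_mul_eq_div, le_div_iff₀ (Real.exp_pos 1)]
      have e3 := Real.exp_pos 1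
      nlinarith
    have hQj : Q x ≤ Real.exp (-B (j + 1)) := by
      calc Q x ≤ P (j + 1) x := hQle _ _
        _ = P j x * Real.sinc (e j * x) ^ (m j) := by simp only [P]; rw [Finset.prod_range_succ]
        _ ≤ 1 * Real.sinc (e j * x) ^ (m j) := by
            gcongr
            · exact hfac0 j x
            · exact hP1 j x
        _ = (Real.sinc (e j * x) ^ 2) ^ ⌈B (j + 1)⌉₊ := by simp only [m]; rw [one_mul, pow_mul]
        _ ≤ (Real.exp (-1)) ^ ⌈B (j + 1)⌉₊ := by gcongr
        _ = Real.exp (-(⌈B (j + 1)⌉₊ : ℝ)) := by rw [← Real.exp_nat_mul]; ring_nf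
        _ ≤ _ := by
            gcongr
            exact Nat.le_ceil _
    calc Q x * ‖g x‖ * Real.exp (B (j + 1)) ≤ Real.exp (-B (j + 1)) * ‖g x‖ * Real.exp (B (j + 1)) := by
          gcongr
      _ = ‖g x‖ := by
          rw [mul_right_comm, ← Real.exp_add]; simp
      _ ≤ _ := hgd x

lemma beurling_locbdd {d : ℕ} {ϑ : (Fin d → ℝ) → ℝ} (h : IsBeurling ϑ) (R : ℝ) :
    ∃ K : ℝ, 1 ≤ K ∧ ∀ x, ‖x‖ ≤ R → ϑ x ≤ K := by
  obtain ⟨hm, h1, hs⟩ := h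
  let S : ℕ → Set (Fin d → ℝ) := fun n => {x | ϑ x ≤ n} ∩ {x | ϑ (-x) ≤ n}
  have hSm : ∀ n, MeasurableSet (S n) := fun n =>
    (measurableSet_le hm measurable_const).inter
      (measurableSet_le (hm.comp measurable_neg) measurable_const)
  have hU : ⋃ n, S n = Set.univ := by
    ext x
    simp only [Set.mem_iUnion, Set.mem_univ, iff_true]
    obtain ⟨n, hn⟩ := exists_nat_ge (max (ϑ x) (ϑ (-x)))
    exact ⟨n, (le_max_left _ _).trans hn, (le_max_right _ _).trans hn⟩
  obtain ⟨n, hn⟩ : ∃ n, 0 < volume (S n) := by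
    by_contra hcon
    push Not at hcon
    have : volume (⋃ n, S n) = 0 := measure_iUnion_null fun n => le_antisymm (hcon n) bot_le
    rw [hU] at this
    exact (NeZero.ne (volume : Measure (Fin d → ℝ))) (Measure.measure_univ_eq_zero.1 this)
  have hnh := Measure.sub_mem_nhds_zero_of_addHaar_pos volume (S n) (hSm n) hn
  obtain ⟨δ, hδ, hb⟩ := Metric.mem_nhds_iff.1 hnh
  have hsmall : ∀ x, ‖x‖ < δ → ϑ x ≤ (n : ℝ) * n := by
    intro x hx
    obtain ⟨a, ha, b, hb', rfl⟩ := Set.mem_sub.1 (hb (by simpa using hx))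
    rw [sub_eq_add_neg]
    refine (hs _ _).trans ?_
    have := h1 (-b)
    have := h1 a
    have := ha.1
    have := hb'.2
    simp only [Set.mem_setOf_eq] at *
    gcongr
  obtain ⟨N, hN⟩ := exists_nat_gt (R / δ)
  have hpow : ∀ (k : ℕ) x, ϑ ((k + 1 : ℕ) • x) ≤ ϑ x ^ (k + 1) := by
    intro k x
    induction k with
    | zero => simp
    | succ k ih =>
      rw [succ_nsmul, pow_succ]
      refine (hs _ _).trans ?_
      have := h1 x
      gcongr
  have hn1 : 1 ≤ (n : ℝ) * n := (h1 0).trans (hsmall 0 (by simpa using hδ))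
  refine ⟨((n : ℝ) * n) ^ (N + 1), one_le_pow₀ hn1, ?_⟩
  intro x hx
  have hx' : x = (N + 1 : ℕ) • (((N + 1 : ℕ) : ℝ)⁻¹ • x) := by
    rw [← Nat.cast_smul_eq_nsmul ℝ, smul_smul, mul_inv_cancel₀ (by positivity), one_smul]
  rw [hx']
  refine (hpow N _).trans ?_
  have := h1 (((N + 1 : ℕ) : ℝ)⁻¹ • x)
  gcongr
  apply hsmall
  rw [norm_smul, norm_inv, Real.norm_natCast, inv_mul_lt_iff₀ (by positivity)]
  rw [div_lt_iff₀ hδ] at hN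
  push_cast
  nlinarith

lemma summable_blocks (b : ℕ → ℝ) (hb : ∀ n, 0 ≤ b n) (hs : Summable b) :
    Summable fun j : ℕ => ∑ n ∈ Finset.Ioc (2 ^ j) (2 ^ (j + 3)), b n := by
  let T : ℕ → ℝ := fun j => ∑ n ∈ Finset.Ioc (2 ^ j) (2 ^ (j + 1)), b n
  have hT0 : ∀ j, 0 ≤ T j := fun j => Finset.sum_nonneg fun n _ => hb n
  have hpart : ∀ N, ∑ j ∈ Finset.range N, T j = ∑ n ∈ Finset.Ioc 1 (2 ^ N), b n := by
    intro N
    induction N with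
    | zero => simp
    | succ k ih =>
      rw [Finset.sum_range_succ, ih]
      exact Finset.sum_Ioc_consecutive b (Nat.one_le_two_pow) (Nat.pow_le_pow_right (by norm_num) (by omega))
  have hT : Summable T := by
    apply summable_of_sum_range_le hT0 (c := ∑' n, b n)
    intro N
    rw [hpart]
    exact hs.sum_le_tsum _ (fun n _ => hb n)
  have : (fun j : ℕ => ∑ n ∈ Finset.Ioc (2 ^ j) (2 ^ (j + 3)), b n) =
      fun j => T j + T (j + 1) + T (j + 2) := by
    ext j
    simp only [T]
    rw [Finset.sum_Ioc_consecutive b, Finset.sum_Ioc_consecutive b]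
    all_goals exact Nat.pow_le_pow_right (by norm_num) (by omega)
  rw [this]
  exact (hT.add ((summable_nat_add_iff 1).2 hT)).add ((summable_nat_add_iff 2).2 hT)

lemma exists_B (v : ℝ → ℝ) (h1 : ∀ s, 1 ≤ v s) (hsub : ∀ s t, v (s + t) ≤ v s * v t) (K : ℝ)
    (hK : ∀ s, |s| ≤ 1 → v s ≤ K) (hp : Summable fun n : ℕ => Real.log (v n) / (n : ℝ) ^ 2)
    (hn : Summable fun n : ℕ => Real.log (v (-n)) / (n : ℝ) ^ 2) :
    ∃ B : ℕ → ℝ, (∀ j, 0 ≤ B j) ∧ (Summable fun j => B j / 2 ^ j) ∧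
      ∀ j s, |s| ≤ 2 ^ j → v s ≤ Real.exp (B j) := by
  let L : ℝ → ℝ := fun s => Real.log (v s)
  have hL0 : ∀ s, 0 ≤ L s := fun s => Real.log_nonneg (h1 s)
  have hLs : ∀ s t, L (s + t) ≤ L s + L t := by
    intro s t
    have a := h1 s
    have b := h1 t
    have e := h1 (s + t)
    simp only [L]
    rw [← Real.log_mul (by positivity) (by positivity)]
    exact Real.log_le_log (by positivity) (hsub s t)
  have hK1 : 1 ≤ K := (h1 0).trans (hK 0 (by simp))
  let c : ℕ → ℝ := fun n => L n + L (-n)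
  have hc0 : ∀ n, 0 ≤ c n := fun n => add_nonneg (hL0 _) (hL0 _)
  let S : ℕ → ℝ := fun j => ∑ n ∈ Finset.Ioc (2 ^ j) (2 ^ (j + 3)), c n
  have hS0 : ∀ j, 0 ≤ S j := fun j => Finset.sum_nonneg fun n _ => hc0 n
  have hkey : ∀ (j : ℕ) (k : ℤ), |k| ≤ 2 ^ j → L k ≤ S j / 2 ^ j := by
    intro j k hk
    rw [abs_le] at hk
    let s : Finset ℕ := Finset.Ioc (2 ^ (j + 1)) (2 ^ (j + 2))
    have hpw : (2:ℤ) ^ (j + 1) = 2 * 2 ^ j ∧ (2:ℤ) ^ (j + 2) = 4 * 2 ^ j ∧ (2:ℤ) ^ (j + 3) = 8 * 2 ^ j := by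
      refine ⟨by ring, by ring, by ring⟩
    have hpos : (0:ℤ) < 2 ^ j := by positivity
    have hs : ∀ n ∈ s, 2 * 2 ^ j < (n:ℤ) ∧ (n:ℤ) ≤ 4 * 2 ^ j := by
      intro n hn
      rw [Finset.mem_Ioc] at hn
      rw [← hpw.1, ← hpw.2.1]
      exact_mod_cast hn
    have hA : ∑ n ∈ s, c n ≤ S j := by
      apply Finset.sum_le_sum_of_subset_of_nonneg _ (fun n _ _ => hc0 n)
      apply Finset.Ioc_subset_Ioc <;> exact Nat.pow_le_pow_right (by norm_num) (by omega)
    let φ : ℕ → ℕ := fun n => ((n : ℤ) - k).toNat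
    have hφ : ∀ n ∈ s, ((φ n : ℕ) : ℤ) = n - k := fun n hn => by
      have := hs n hn
      exact Int.toNat_of_nonneg (by linarith)
    have hinj : Set.InjOn φ s := by
      intro a ha b hb hab
      have e1 := hφ a ha
      have e2 := hφ b hb
      rw [hab] at e1
      omega
    have hBs : ∑ n ∈ s, c (φ n) ≤ S j := by
      rw [← Finset.sum_image (f := c) hinj]
      apply Finset.sum_le_sum_of_subset_of_nonneg _ (fun n _ _ => hc0 n)
      intro m hm
      rw [Finset.mem_image] at hm
      obtain ⟨n, hn, rfl⟩ := hm
      have e1 := hφ n hn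
      have e2 := hs n hn
      rw [Finset.mem_Ioc]
      have : (2:ℤ) ^ j < φ n ∧ (φ n : ℤ) ≤ 2 ^ (j + 3) := by
        rw [e1, hpw.2.2]; constructor <;> linarith
      exact_mod_cast this
    have hterm : ∀ n ∈ s, L k ≤ c n + c (φ n) := by
      intro n hn
      have e1 : ((φ n : ℕ) : ℝ) = n - k := by exact_mod_cast hφ n hn
      have : (k : ℝ) = n + (-(φ n : ℝ)) := by rw [e1]; ring
      rw [this]
      refine (hLs _ _).trans ?_
      simp only [c]
      have := hL0 (-(n:ℝ))
      have := hL0 (φ n : ℝ)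
      linarith
    have hcard : ∑ n ∈ s, L k = 2 * 2 ^ j * L k := by
      rw [Finset.sum_const, Nat.card_Ioc, nsmul_eq_mul]
      congr 1
      have : 2 ^ (j + 2) - 2 ^ (j + 1) = 2 * 2 ^ j := by
        rw [pow_succ, pow_succ]; omega
      rw [this]; push_cast; ring
    have := Finset.sum_le_sum hterm
    rw [hcard, Finset.sum_add_distrib] at this
    rw [le_div_iff₀ (by positivity)]
    linarith
  refine ⟨fun j => Real.log K + S j / 2 ^ j, ?_, ?_, ?_⟩
  · intro j
    have := hS0 j
    have := Real.log_nonneg hK1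
    positivity
  · have hb : Summable fun n : ℕ => c n / (n : ℝ) ^ 2 := by
      have := hp.add hn
      refine this.congr fun n => ?_
      simp only [c, L]; ring
    have hbl := (summable_blocks _ (fun n => div_nonneg (hc0 n) (by positivity)) hb).mul_left 64
    have hg : Summable fun j : ℕ => Real.log K * (1 / 2 : ℝ) ^ j := summable_geometric_two.mul_left _
    refine Summable.of_nonneg_of_le (fun j => ?_) (fun j => ?_) (hg.add hbl)
    · have := hS0 j
      have := Real.log_nonneg hK1
      positivity
    · rw [add_div]
      apply add_le_add
      · rw [one_div, inv_pow]; rfl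
      · rw [div_div, div_le_iff₀ (by positivity)]
        simp only [S]
        rw [mul_assoc, Finset.sum_mul, Finset.mul_sum]
        apply Finset.sum_le_sum
        intro n hn
        rw [Finset.mem_Ioc] at hn
        have hn0 : 0 < n := lt_of_le_of_lt (Nat.zero_le _) hn.1
        have hn' : (n:ℝ) ≤ 8 * 2 ^ j := by
          have : (n:ℝ) ≤ 2 ^ (j + 3) := by exact_mod_cast hn.2
          rw [pow_add] at this; linarith
        have hn0' : (0:ℝ) < n := by exact_mod_cast hn0
        have : 64 * (c n / (n:ℝ) ^ 2 * (2 ^ j * 2 ^ j)) = c n * ((8 * 2 ^ j) ^ 2 / (n:ℝ) ^ 2) := by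
          ring
        rw [this]
        apply le_mul_of_one_le_right (hc0 n)
        rw [one_le_div (by positivity)]
        gcongr
  · intro j s hs
    have hv : v s = Real.exp (L s) := (Real.exp_log (by have := h1 s; positivity)).symm
    rw [hv]
    gcongr
    have e : s = Int.fract s + (⌊s⌋ : ℝ) := (Int.fract_add_floor s).symm
    rw [e]
    refine (hLs _ _).trans (add_le_add ?_ ?_)
    · apply Real.log_le_log
      · have := h1 (Int.fract s); positivity
      · apply hK
        rw [abs_of_nonneg (Int.fract_nonneg s)]
        exact (Int.fract_lt_one s).le
    · apply hkey
      rw [abs_le] at hs ⊢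
      constructor
      · rw [Int.le_floor]; push_cast; exact hs.1
      · have : (⌊s⌋ : ℝ) ≤ 2 ^ j := (Int.floor_le s).trans hs.2
        exact_mod_cast this

lemma exists_h1' (v : ℝ → ℝ) (h1 : ∀ s, 1 ≤ v s) (hsub : ∀ s t, v (s + t) ≤ v s * v t) (K : ℝ)
    (hK : ∀ s, |s| ≤ 1 → v s ≤ K) (hp : Summable fun n : ℕ => Real.log (v n) / (n : ℝ) ^ 2)
    (hn : Summable fun n : ℕ => Real.log (v (-n)) / (n : ℝ) ^ 2) :
    ∃ h : ℝ → ℂ, ∃ C R : ℝ, Measurable h ∧ FtInv h 1 R ∧ 0 < C ∧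
      ∀ s y, |s| ≤ |y| → ‖h y‖ * v s ≤ C / (1 + y ^ 2) := by
  obtain ⟨B, hB, hBs, hv⟩ := exists_B v h1 hsub K hK hp hn
  obtain ⟨h, C, R, hm, hF, hC, hd, hdB⟩ := exists_h1 B hB hBs
  have hK1 : 1 ≤ K := (h1 0).trans (hK 0 (by simp))
  refine ⟨h, C * K, R, hm, hF, by positivity, ?_⟩
  intro s y hs
  by_cases hy : |y| ≤ 1
  · have := hd y
    have := hK s (hs.trans hy)
    have := h1 s
    calc ‖h y‖ * v s ≤ C / (1 + y ^ 2) * K := by gcongr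
      _ = _ := by ring
  · push Not at hy
    obtain ⟨j, hj1, hj2⟩ := exists_nat_pow_near hy.le (show (1:ℝ) < 2 by norm_num)
    have h3 := hv (j + 1) s (hs.trans hj2.le)
    calc ‖h y‖ * v s ≤ ‖h y‖ * Real.exp (B (j + 1)) := by gcongr
      _ ≤ C / (1 + y ^ 2) := hdB j y hj1
      _ ≤ _ := by
        gcongr
        exact le_mul_of_one_le_right hC.le hK1

/-- Product Cauchy kernel. -/
noncomputable def gker {d : ℕ} (y : Fin d → ℝ) : ℝ := ∏ i, (1 + y i ^ 2)⁻¹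

lemma gker_pos {d : ℕ} (y : Fin d → ℝ) : 0 < gker y := Finset.prod_pos fun i _ => by positivity

lemma gker_integrable {d : ℕ} : Integrable (gker (d := d)) := by
  unfold gker
  exact Integrable.fintype_prod (f := fun (_ : Fin d) (x : ℝ) => (1 + x ^ 2)⁻¹)
    (fun _ => integrable_inv_one_add_sq)

lemma gker_measurable {d : ℕ} : Measurable (gker (d := d)) := by
  unfold gker
  fun_prop

lemma weight_prod {d : ℕ} {w : (Fin d → ℝ) → ℝ} (h : IsBeurling w) (s : Fin d → ℝ) :
    w s ≤ w 0 * ∏ i, w (Pi.single i (s i)) := by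
  have key : ∀ S : Finset (Fin d), w (∑ i ∈ S, Pi.single i (s i)) ≤ w 0 * ∏ i ∈ S, w (Pi.single i (s i)) := by
    intro S
    induction S using Finset.induction_on with
    | empty => simp
    | insert a S ha ih =>
      rw [Finset.sum_insert ha, Finset.prod_insert ha]
      refine (h.2.2 _ _).trans ?_
      have := h.2.1 (Pi.single a (s a))
      calc w (Pi.single a (s a)) * w (∑ i ∈ S, Pi.single i (s i))
          ≤ w (Pi.single a (s a)) * (w 0 * ∏ i ∈ S, w (Pi.single i (s i))) := by gcongr
        _ = _ := by ring
  have := key Finset.univ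
  rwa [Finset.univ_sum_single] at this

lemma fourierT_prod {d : ℕ} (h : Fin d → ℝ → ℂ) (ξ : Fin d → ℝ) :
    fourierT (fun y => ∏ i, h i (y i)) ξ = ∏ i, ft1 (h i) (ξ i) := by
  unfold fourierT ft1
  rw [← integral_fintype_prod_volume_eq_prod]
  congr 1
  ext x
  rw [Finset.prod_mul_distrib, ← Complex.exp_sum]
  congr 2
  rw [Finset.mul_sum, Finset.sum_neg_distrib]

lemma exists_hd {d : ℕ} {w : (Fin d → ℝ) → ℝ} (hw : IsBeurling w) (hBD : BeurlingDomar w) :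
    ∃ h : (Fin d → ℝ) → ℂ, ∃ D R : ℝ, Measurable h ∧ 0 < D ∧ 0 < R ∧
      (∀ s y : Fin d → ℝ, (∀ i, |s i| ≤ |y i|) → ‖h y‖ * w s ≤ D * gker y) ∧
      (∀ ξ, ‖ξ‖ ≤ 1 → fourierT h ξ = 1) ∧ (∀ ξ, R < ‖ξ‖ → fourierT h ξ = 0) := by
  obtain ⟨K, hK1, hK⟩ := beurling_locbdd hw 1
  have hex : ∀ i : Fin d, ∃ h : ℝ → ℂ, ∃ C R : ℝ, Measurable h ∧ FtInv h 1 R ∧ 0 < C ∧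
      ∀ s y : ℝ, |s| ≤ |y| → ‖h y‖ * w (Pi.single i s) ≤ C / (1 + y ^ 2) := by
    intro i
    apply exists_h1' (fun s => w (Pi.single i s)) (fun s => hw.2.1 _) _ K
    · intro s hs
      apply hK
      refine (pi_norm_le_iff_of_nonneg zero_le_one).2 fun j => ?_
      by_cases hj : j = i
      · subst hj; simpa using hs
      · simp [Pi.single_eq_of_ne hj]
    · have := hBD (Pi.single i 1)
      refine this.congr fun n => ?_
      rw [← Pi.single_smul]; simp
    · have := hBD (Pi.single i (-1))
      refine this.congr fun n => ?_
      rw [← Pi.single_smul]; simp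
    · intro s t
      simp only [Pi.single_add]
      exact hw.2.2 _ _
  choose h C R hm hF hC hd using hex
  have hw0 := hw.2.1 0
  refine ⟨fun y => ∏ i, h i (y i), w 0 * ∏ i, C i, 1 + ∑ i, |R i|, ?_, ?_, ?_, ?_, ?_, ?_⟩
  · fun_prop
  · have := Finset.prod_pos fun i (_ : i ∈ Finset.univ) => hC i
    positivity
  · have := Finset.sum_nonneg fun i (_ : i ∈ Finset.univ) => abs_nonneg (R i)
    linarith
  · intro s y hsy
    rw [norm_prod]
    calc (∏ i, ‖h i (y i)‖) * w s ≤ (∏ i, ‖h i (y i)‖) * (w 0 * ∏ i, w (Pi.single i (s i))) := by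
          gcongr
          exact weight_prod hw s
      _ = w 0 * ∏ i, (‖h i (y i)‖ * w (Pi.single i (s i))) := by
          rw [Finset.prod_mul_distrib]; ring
      _ ≤ w 0 * ∏ i, (C i / (1 + y i ^ 2)) := by
          gcongr with i
          · intro i _
            have := hw.2.1 (Pi.single i (s i))
            positivity
          · exact hd i _ _ (hsy i)
      _ = _ := by
          unfold gker
          simp_rw [div_eq_mul_inv]
          rw [Finset.prod_mul_distrib]; ring
  · intro ξ hξ
    rw [fourierT_prod]
    apply Finset.prod_eq_one
    intro i _
    exact (hF i).2.1 _ ((norm_le_pi_norm ξ i).trans hξ)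
  · intro ξ hξ
    rw [fourierT_prod]
    by_contra hne
    have hne' : ∀ i, ft1 (h i) (ξ i) ≠ 0 := fun i h0 => hne (Finset.prod_eq_zero (Finset.mem_univ i) h0)
    have hle : ∀ i, |ξ i| ≤ 1 + ∑ i, |R i| := by
      intro i
      by_contra hgt
      push Not at hgt
      apply hne' i
      apply (hF i).2.2
      have e1 : |R i| ≤ ∑ i, |R i| :=
        Finset.single_le_sum (f := fun i => |R i|) (fun i _ => abs_nonneg _) (Finset.mem_univ i)
      have := le_abs_self (R i)
      linarith
    have hnn : 0 ≤ 1 + ∑ i, |R i| := by positivity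
    have := (pi_norm_le_iff_of_nonneg (x := ξ) hnn).2 hle
    linarith

/-! cubes -/

lemma mem_cube {d : ℕ} {α : Fin d → ℤ} {x : Fin d → ℝ} : x ∈ cube α ↔ ∀ i, ⌊x i⌋ = α i := by
  simp [cube, Int.floor_eq_iff]

lemma measurableSet_cube {d : ℕ} (α : Fin d → ℤ) : MeasurableSet (cube α) :=
  MeasurableSet.univ_pi fun _ => measurableSet_Ico

lemma volume_cube {d : ℕ} (α : Fin d → ℤ) : volume (cube α) = 1 := by
  unfold cube
  rw [volume_pi_pi]
  simp

lemma iUnion_cube {d : ℕ} : ⋃ α : Fin d → ℤ, cube α = Set.univ := by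
  ext x
  simp only [Set.mem_iUnion, Set.mem_univ, iff_true]
  exact ⟨fun i => ⌊x i⌋, mem_cube.2 fun i => rfl⟩

lemma disjoint_cube {d : ℕ} : Pairwise (Function.onFun Disjoint (cube (d := d))) := by
  intro α β hne
  rw [Function.onFun, Set.disjoint_left]
  intro x hx hy
  apply hne
  ext i
  rw [← mem_cube.1 hx i, mem_cube.1 hy i]

lemma lintegral_cubes {d : ℕ} (F : (Fin d → ℝ) → ℝ≥0∞) :
    ∫⁻ x, F x = ∑' α : Fin d → ℤ, ∫⁻ x in cube α, F x := by
  rw [← lintegral_iUnion measurableSet_cube disjoint_cube, iUnion_cube, Measure.restrict_univ]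

instance {d : ℕ} (α : Fin d → ℤ) : IsProbabilityMeasure ((volume : Measure (Fin d → ℝ)).restrict (cube α)) :=
  ⟨by rw [Measure.restrict_apply_univ, volume_cube]⟩

lemma gker_cube {d : ℕ} {α : Fin d → ℤ} {x y : Fin d → ℝ} (hx : x ∈ cube α) (hy : y ∈ cube α) :
    gker x ≤ 3 ^ d * gker y := by
  have h3 : (3:ℝ) ^ d = ∏ _i : Fin d, 3 := by simp
  unfold gker
  rw [h3, ← Finset.prod_mul_distrib]
  apply Finset.prod_le_prod
  · intro i _; positivity
  · intro i _
    have ax := mem_cube.1 hx i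
    have ay := mem_cube.1 hy i
    rw [Int.floor_eq_iff] at ax ay
    rw [← div_eq_mul_inv, le_div_iff₀ (by positivity), inv_mul_le_iff₀ (by positivity)]
    nlinarith [sq_nonneg (x i + (x i - y i)), mul_nonneg (show 0 ≤ 1 - (x i - y i) by linarith) (show 0 ≤ 1 + (x i - y i) by linarith)]

lemma amalgam_of_gker {d : ℕ} {p : ℝ} (w : (Fin d → ℝ) → ℝ) (h : (Fin d → ℝ) → ℂ) (D : ℝ)
    (hD : 0 ≤ D) (hb : ∀ x, ‖w x • h x‖ ≤ D * gker x) : amalgamNorm p 1 w h < ⊤ := by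
  unfold amalgamNorm
  simp only [ENNReal.rpow_one, one_div, inv_one]
  have hterm : ∀ α : Fin d → ℤ, eLpNorm (fun x => w x • h x) (ENNReal.ofReal p) (volume.restrict (cube α))
      ≤ ENNReal.ofReal (D * 3 ^ d) * ∫⁻ y in cube α, ENNReal.ofReal (gker y) := by
    intro α
    have h1 : ∀ y ∈ cube α, eLpNorm (fun x => w x • h x) (ENNReal.ofReal p) (volume.restrict (cube α))
        ≤ ENNReal.ofReal (D * 3 ^ d) * ENNReal.ofReal (gker y) := by
      intro y hy
      refine (eLpNorm_le_of_ae_bound (C := D * 3 ^ d * gker y) ?_).trans ?_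
      · filter_upwards [ae_restrict_mem (measurableSet_cube α)] with x hx
        refine (hb x).trans ?_
        rw [mul_assoc]
        gcongr
        exact gker_cube hx hy
      · rw [measure_univ, ENNReal.one_rpow, one_mul, ENNReal.ofReal_mul (by positivity)]
    calc eLpNorm (fun x => w x • h x) (ENNReal.ofReal p) (volume.restrict (cube α))
        = ∫⁻ y in cube α, eLpNorm (fun x => w x • h x) (ENNReal.ofReal p) (volume.restrict (cube α)) := by
          rw [lintegral_const, measure_univ, mul_one]
      _ ≤ ∫⁻ y in cube α, ENNReal.ofReal (D * 3 ^ d) * ENNReal.ofReal (gker y) :=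
          setLIntegral_mono' (measurableSet_cube α) h1
      _ = _ := lintegral_const_mul _ gker_measurable.ennreal_ofReal
  refine lt_of_le_of_lt (ENNReal.tsum_le_tsum hterm) ?_
  rw [ENNReal.tsum_mul_left, ← lintegral_cubes]
  exact ENNReal.mul_lt_top ENNReal.ofReal_lt_top gker_integrable.lintegral_lt_top

lemma minkowski_lintegral {T X : Type*} [MeasurableSpace T] [MeasurableSpace X] (μ : Measure T) [SFinite μ]
    (ν : Measure X) [IsFiniteMeasure ν] {p : ℝ} (hp : 1 ≤ p) (F : T → X → ℝ≥0∞)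
    (hF : Measurable (Function.uncurry F)) :
    (∫⁻ x, (∫⁻ t, F t x ∂μ) ^ p ∂ν) ^ (1 / p) ≤ ∫⁻ t, (∫⁻ x, (F t x) ^ p ∂ν) ^ (1 / p) ∂μ := by
  rcases hp.eq_or_lt with rfl | hp1
  · simp only [ENNReal.rpow_one, one_div, inv_one]
    rw [lintegral_lintegral_swap]
    exact (hF.comp measurable_swap).aemeasurable
  have hpq := Real.HolderConjugate.conjExponent hp1
  set q := p.conjExponent
  have hp0 : 0 < p := by linarith
  set U := ∫⁻ t, (∫⁻ x, (F t x) ^ p ∂ν) ^ (1 / p) ∂μ with hU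
  let H : X → ℝ≥0∞ := fun x => ∫⁻ t, F t x ∂μ
  have hHm : Measurable H := (hF.comp measurable_swap).lintegral_prod_right'
  let Hk : ℕ → X → ℝ≥0∞ := fun k x => min (H x) k
  have hHkm : ∀ k, Measurable (Hk k) := fun k => hHm.min measurable_const
  have hI : ∀ k, ∫⁻ x, Hk k x ^ p ∂ν ≤ U ^ p := by
    intro k
    set I := ∫⁻ x, Hk k x ^ p ∂ν with hIdef
    have hItop : I ≠ ⊤ := by
      have : I ≤ ∫⁻ x, (k : ℝ≥0∞) ^ p ∂ν := lintegral_mono fun x => by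
        gcongr
        exact min_le_right _ _
      refine ne_top_of_le_ne_top ?_ this
      rw [lintegral_const]
      exact ENNReal.mul_ne_top (ENNReal.rpow_ne_top_of_nonneg hp0.le (ENNReal.natCast_ne_top k)) (measure_ne_top _ _)
    have h1 : I ≤ U * I ^ (1 / q) := by
      calc I ≤ ∫⁻ x, H x * Hk k x ^ (p - 1) ∂ν := by
            apply lintegral_mono
            intro x
            have hne : Hk k x ≠ ⊤ := ne_top_of_le_ne_top (ENNReal.natCast_ne_top k) (min_le_right _ _)
            have : Hk k x ^ p = Hk k x * Hk k x ^ (p - 1) := by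
              conv_lhs => rw [show p = 1 + (p - 1) by ring]
              rw [ENNReal.rpow_add_of_nonneg _ _ zero_le_one (by linarith), ENNReal.rpow_one]
            simp only [this]
            gcongr
            exact min_le_left _ _
        _ = ∫⁻ x, ∫⁻ t, F t x * Hk k x ^ (p - 1) ∂μ ∂ν := by
            apply lintegral_congr
            intro x
            rw [lintegral_mul_const]
            exact hF.comp (measurable_id.prodMk measurable_const)
        _ = ∫⁻ t, ∫⁻ x, F t x * Hk k x ^ (p - 1) ∂ν ∂μ := by
            rw [lintegral_lintegral_swap]
            apply Measurable.aemeasurable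
            exact (hF.comp measurable_swap).mul (((hHkm k).comp measurable_fst).pow_const _)
        _ ≤ ∫⁻ t, (∫⁻ x, (F t x) ^ p ∂ν) ^ (1 / p) * I ^ (1 / q) ∂μ := by
            apply lintegral_mono
            intro t
            exact ENNReal.lintegral_mul_rpow_le_lintegral_rpow_mul_lintegral_rpow hpq
              (hF.comp (measurable_const.prodMk measurable_id)).aemeasurable (hHkm k).aemeasurable
        _ = _ := by
            rw [lintegral_mul_const]
            apply Measurable.pow_const
            exact Measurable.lintegral_prod_right' (f := fun z => Function.uncurry F z ^ p) (hF.pow_const p)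
    by_cases hI0 : I = 0
    · rw [hI0]; exact zero_le
    have h2 : I ^ (1 / p) ≤ U := by
      have e : I = I ^ (1 / p) * I ^ (1 / q) := by
        rw [← ENNReal.rpow_add _ _ hI0 hItop]
        have := hpq.inv_add_inv_eq_one
        rw [one_div, one_div, this, ENNReal.rpow_one]
      have hne0 : I ^ (1 / q) ≠ 0 := by
        intro h; rw [ENNReal.rpow_eq_zero_iff] at h
        rcases h with h | h
        · exact hI0 h.1
        · exact hItop h.1
      have hnet : I ^ (1 / q) ≠ ⊤ := ENNReal.rpow_ne_top_of_nonneg (by have := hpq.symm.pos; positivity) hItop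
      rw [e] at h1
      conv at h1 => rhs; rw [← e]
      exact (ENNReal.mul_le_mul_iff_left hne0 hnet).1 h1
    calc I = (I ^ (1 / p)) ^ p := by rw [← ENNReal.rpow_mul, one_div, inv_mul_cancel₀ hp0.ne', ENNReal.rpow_one]
      _ ≤ U ^ p := by gcongr
  have hlim : Tendsto (fun k => ∫⁻ x, Hk k x ^ p ∂ν) atTop (𝓝 (∫⁻ x, H x ^ p ∂ν)) := by
    apply lintegral_tendsto_of_tendsto_of_monotone
    · exact fun k => ((hHkm k).pow_const p).aemeasurable
    · filter_upwards with x
      intro a b hab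
      simp only [Hk]
      gcongr
    · filter_upwards with x
      apply (ENNReal.continuous_rpow_const.tendsto _).comp
      have := (tendsto_const_nhds (x := H x)).min ENNReal.tendsto_nat_nhds_top
      simpa using this
  have := le_of_tendsto' hlim hI
  calc (∫⁻ x, H x ^ p ∂ν) ^ (1 / p) ≤ (U ^ p) ^ (1 / p) := by gcongr
    _ = U := by rw [← ENNReal.rpow_mul, one_div, mul_inv_cancel₀ hp0.ne', ENNReal.rpow_one]

lemma eLpNorm_real {X E : Type*} [MeasurableSpace X] [NormedAddCommGroup E] {p : ℝ} (hp : 1 ≤ p) (g : X → E)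
    (μ : Measure X) : eLpNorm g (ENNReal.ofReal p) μ = (∫⁻ x, ‖g x‖ₑ ^ p ∂μ) ^ (1 / p) := by
  rw [eLpNorm_eq_lintegral_rpow_enorm_toReal, ENNReal.toReal_ofReal (by linarith)]
  · simp; linarith
  · exact ENNReal.ofReal_ne_top

lemma amalgam_one {d : ℕ} (p : ℝ) (w : (Fin d → ℝ) → ℝ) (f : (Fin d → ℝ) → ℂ) :
    amalgamNorm p 1 w f = ∑' α : Fin d → ℤ,
      eLpNorm (fun x => w x • f x) (ENNReal.ofReal p) (volume.restrict (cube α)) := by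
  unfold amalgamNorm
  simp only [ENNReal.rpow_one, one_div, inv_one]

lemma translate_cube_le {d : ℕ} {p : ℝ} (hp : 1 ≤ p) {w : (Fin d → ℝ) → ℝ} (hw : IsBeurling w)
    {f : (Fin d → ℝ) → ℂ} (hf : Measurable f) (t : Fin d → ℝ) (α : Fin d → ℤ) (N : Finset (Fin d → ℤ))
    (hN : ∀ x ∈ cube α, ∃ γ ∈ N, x - t ∈ cube (α - γ)) :
    eLpNorm (fun x => w x • f (x - t)) (ENNReal.ofReal p) (volume.restrict (cube α)) ≤
      ENNReal.ofReal (w t) * ∑ γ ∈ N,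
        eLpNorm (fun x => w x • f x) (ENNReal.ofReal p) (volume.restrict (cube (α - γ))) := by
  have hp' : 1 ≤ ENNReal.ofReal p := by simpa using hp
  have hwm := hw.1
  let g : (Fin d → ℝ) → ℂ := fun x => w x • f x
  have hg : Measurable g := hwm.smul hf
  let G : (Fin d → ℤ) → (Fin d → ℝ) → ℝ := fun γ x => (cube (α - γ)).indicator (fun x => ‖g x‖) (x - t)
  have hGm : ∀ γ, Measurable (G γ) := fun γ =>
    (hg.norm.indicator (measurableSet_cube _)).comp (measurable_id.sub_const t)
  have hG0 : ∀ γ x, 0 ≤ G γ x := fun γ x => Set.indicator_nonneg (fun _ _ => norm_nonneg _) _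
  have hGe : ∀ γ, eLpNorm (G γ) (ENNReal.ofReal p) volume =
      eLpNorm g (ENNReal.ofReal p) (volume.restrict (cube (α - γ))) := by
    intro γ
    have h1 := eLpNorm_comp_measurePreserving (p := ENNReal.ofReal p)
      (g := (cube (α - γ)).indicator (fun x => ‖g x‖)) (μ := volume)
      (hg.norm.indicator (measurableSet_cube _)).aestronglyMeasurable (measurePreserving_sub_right volume t)
    refine Eq.trans h1 ?_
    rw [eLpNorm_indicator_eq_eLpNorm_restrict (measurableSet_cube _), eLpNorm_norm]
  calc eLpNorm (fun x => w x • f (x - t)) (ENNReal.ofReal p) (volume.restrict (cube α))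
      ≤ eLpNorm (w t • fun x => ∑ γ ∈ N, G γ x) (ENNReal.ofReal p) (volume.restrict (cube α)) := by
        apply eLpNorm_mono_ae
        filter_upwards [ae_restrict_mem (measurableSet_cube α)] with x hx
        obtain ⟨γ, hγ, hxγ⟩ := hN x hx
        have h1 : ‖g (x - t)‖ ≤ ∑ γ ∈ N, G γ x := by
          have : G γ x = ‖g (x - t)‖ := Set.indicator_of_mem hxγ _
          rw [← this]
          exact Finset.single_le_sum (f := fun γ => G γ x) (fun γ _ => hG0 γ x) hγ
        have h2 : w x ≤ w t * w (x - t) := by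
          have := hw.2.2 t (x - t)
          rwa [add_sub_cancel] at this
        have w0 : ∀ x, 0 ≤ w x := fun x => zero_le_one.trans (hw.2.1 x)
        rw [norm_smul, Real.norm_of_nonneg (w0 x)]
        simp only [Pi.smul_apply, smul_eq_mul]
        rw [Real.norm_of_nonneg (mul_nonneg (w0 t) (Finset.sum_nonneg fun γ _ => hG0 γ x))]
        calc w x * ‖f (x - t)‖ ≤ w t * w (x - t) * ‖f (x - t)‖ := by gcongr
          _ = w t * ‖g (x - t)‖ := by
              simp only [g]; rw [norm_smul, Real.norm_of_nonneg (w0 _)]; ring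
          _ ≤ _ := by have := w0 t; gcongr
    _ ≤ eLpNorm (w t • fun x => ∑ γ ∈ N, G γ x) (ENNReal.ofReal p) volume :=
        eLpNorm_mono_measure _ Measure.restrict_le_self
    _ ≤ ENNReal.ofReal (w t) * eLpNorm (fun x => ∑ γ ∈ N, G γ x) (ENNReal.ofReal p) volume := by
        refine (eLpNorm_const_smul_le).trans ?_
        rw [Real.enorm_of_nonneg (zero_le_one.trans (hw.2.1 t))]
    _ ≤ ENNReal.ofReal (w t) * ∑ γ ∈ N, eLpNorm (G γ) (ENNReal.ofReal p) volume := by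
        gcongr
        have := eLpNorm_sum_le (f := G) (s := N) (μ := volume)
          (fun γ _ => (hGm γ).aestronglyMeasurable) hp'
        refine le_trans (le_of_eq ?_) this
        congr 1
        ext x; simp
    _ = _ := by simp_rw [hGe]; rfl

lemma tsum_shift {d : ℕ} (a : (Fin d → ℤ) → ℝ≥0∞) (N : Finset (Fin d → ℤ)) :
    ∑' α, ∑ γ ∈ N, a (α - γ) = N.card * ∑' α, a α := by
  rw [Summable.tsum_finsetSum (fun i _ => ENNReal.summable)]
  refine (Finset.sum_congr rfl (fun γ _ => (Equiv.subRight γ).tsum_eq a)).trans ?_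
  simp

lemma translate_le {d : ℕ} {p : ℝ} (hp : 1 ≤ p) {w : (Fin d → ℝ) → ℝ} (hw : IsBeurling w)
    {f : (Fin d → ℝ) → ℂ} (hf : Measurable f) (t : Fin d → ℝ) :
    amalgamNorm p 1 w (fun x => f (x - t)) ≤ ENNReal.ofReal (w t) * (2 ^ d * amalgamNorm p 1 w f) := by
  rw [amalgam_one, amalgam_one]
  let N : Finset (Fin d → ℤ) := Fintype.piFinset fun i => {⌊t i⌋, ⌊t i⌋ + 1}
  have hN : N.card ≤ 2 ^ d := by
    simp only [N]
    rw [Fintype.card_piFinset]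
    calc ∏ i, Finset.card ({⌊t i⌋, ⌊t i⌋ + 1} : Finset ℤ) ≤ ∏ _i : Fin d, 2 :=
          Finset.prod_le_prod' fun i _ => Finset.card_le_two
      _ = 2 ^ d := by simp
  calc _ ≤ ∑' α : Fin d → ℤ, ENNReal.ofReal (w t) * ∑ γ ∈ N,
        eLpNorm (fun x => w x • f x) (ENNReal.ofReal p) (volume.restrict (cube (α - γ))) := by
        apply ENNReal.tsum_le_tsum
        intro α
        apply translate_cube_le hp hw hf
        intro x hx
        refine ⟨fun i => α i - ⌊x i - t i⌋, ?_, ?_⟩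
        · rw [Fintype.mem_piFinset]
          intro i
          have h1 := mem_cube.1 hx i
          rw [Int.floor_eq_iff] at h1
          have h2 := Int.floor_le (t i)
          have h3 := Int.lt_floor_add_one (t i)
          have h4 := Int.floor_le (x i - t i)
          have h5 := Int.lt_floor_add_one (x i - t i)
          have a1 : (⌊t i⌋ : ℝ) - 1 < α i - ⌊x i - t i⌋ := by linarith
          have a2 : (α i : ℝ) - ⌊x i - t i⌋ < ⌊t i⌋ + 2 := by linarith
          have b1 : ⌊t i⌋ - 1 < α i - ⌊x i - t i⌋ := by exact_mod_cast a1
          have b2 : α i - ⌊x i - t i⌋ < ⌊t i⌋ + 2 := by exact_mod_cast a2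
          simp only [Finset.mem_insert, Finset.mem_singleton]
          omega
        · rw [mem_cube]; intro i; simp
    _ = ENNReal.ofReal (w t) * (N.card * ∑' α : Fin d → ℤ,
        eLpNorm (fun x => w x • f x) (ENNReal.ofReal p) (volume.restrict (cube α))) := by
        rw [ENNReal.tsum_mul_left]
        congr 1
        exact tsum_shift (fun α => eLpNorm (fun x => w x • f x) (ENNReal.ofReal p) (volume.restrict (cube α))) N
    _ ≤ _ := by
        gcongr
        exact_mod_cast hN

lemma amalgam_sub_le {d : ℕ} {p : ℝ} (hp : 1 ≤ p) {w : (Fin d → ℝ) → ℝ} (hw : Measurable w)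
    {f g : (Fin d → ℝ) → ℂ} (hf : Measurable f) (hg : Measurable g) :
    amalgamNorm p 1 w (fun x => f x - g x) ≤ amalgamNorm p 1 w f + amalgamNorm p 1 w g := by
  rw [amalgam_one, amalgam_one, amalgam_one, ← ENNReal.tsum_add]
  apply ENNReal.tsum_le_tsum
  intro α
  simp_rw [smul_sub]
  exact eLpNorm_sub_le (hw.smul hf).aestronglyMeasurable (hw.smul hg).aestronglyMeasurable (by simpa using hp)

lemma memLp_of_amalgam {d : ℕ} {p : ℝ} (hp : 1 ≤ p) {w : (Fin d → ℝ) → ℝ} (hw : IsBeurling w)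
    {f : (Fin d → ℝ) → ℂ} (hf : Measurable f) (hA : amalgamNorm p 1 w f < ⊤) :
    MemLp f (ENNReal.ofReal p) volume := by
  refine ⟨hf.aestronglyMeasurable, ?_⟩
  rw [amalgam_one] at hA
  set a : (Fin d → ℤ) → ℝ≥0∞ := fun α =>
      eLpNorm (fun x => w x • f x) (ENNReal.ofReal p) (volume.restrict (cube α))
  have hp0 : 0 < p := by linarith
  rw [eLpNorm_real hp]
  apply ENNReal.rpow_lt_top_of_nonneg (by positivity)
  rw [lintegral_cubes]
  have h1 : ∀ α : Fin d → ℤ, ∫⁻ x in cube α, ‖f x‖ₑ ^ p ≤ (∑' α, a α) ^ (p - 1) * a α := by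
    intro α
    have h2 : eLpNorm f (ENNReal.ofReal p) (volume.restrict (cube α)) ≤ a α := by
      apply eLpNorm_mono
      intro x
      have := hw.2.1 x
      rw [norm_smul, Real.norm_of_nonneg (by linarith)]
      exact le_mul_of_one_le_left (norm_nonneg _) this
    rw [eLpNorm_real hp] at h2
    calc ∫⁻ x in cube α, ‖f x‖ₑ ^ p = ((∫⁻ x in cube α, ‖f x‖ₑ ^ p) ^ (1 / p)) ^ p := by
          rw [← ENNReal.rpow_mul, one_div, inv_mul_cancel₀ hp0.ne', ENNReal.rpow_one]
      _ ≤ a α ^ p := by gcongr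
      _ = a α ^ (p - 1) * a α := by
          conv_lhs => rw [show p = (p - 1) + 1 by ring]
          rw [ENNReal.rpow_add_of_nonneg _ _ (by linarith) zero_le_one, ENNReal.rpow_one]
      _ ≤ _ := by
          gcongr
          exact ENNReal.le_tsum α
  refine ne_top_of_le_ne_top ?_ (ENNReal.tsum_le_tsum h1)
  rw [ENNReal.tsum_mul_left]
  exact ENNReal.mul_ne_top (ENNReal.rpow_ne_top_of_nonneg (by linarith) hA.ne) hA.ne

lemma integrable_of_amalgam {d : ℕ} {p : ℝ} (hp : 1 ≤ p) {w : (Fin d → ℝ) → ℝ} (hw : IsBeurling w)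
    {f : (Fin d → ℝ) → ℂ} (hf : Measurable f) (hA : amalgamNorm p 1 w f < ⊤) : Integrable f := by
  have h1 : amalgamNorm 1 1 w f < ⊤ := by
    refine lt_of_le_of_lt ?_ hA
    rw [amalgam_one, amalgam_one]
    apply ENNReal.tsum_le_tsum
    intro α
    apply eLpNorm_le_eLpNorm_of_exponent_le
    · gcongr
    · exact (hw.1.smul hf).aestronglyMeasurable
  have := memLp_of_amalgam le_rfl hw hf h1
  rw [ENNReal.ofReal_one] at this
  exact memLp_one_iff_integrable.1 this

lemma tendsto_translate_Lp {d : ℕ} {p : ℝ} (hp : 1 ≤ p) {f : (Fin d → ℝ) → ℂ}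
    (hf : MemLp f (ENNReal.ofReal p) volume) :
    Tendsto (fun t : Fin d → ℝ => eLpNorm (fun x => f (x - t) - f x) (ENNReal.ofReal p) volume) (𝓝 0) (𝓝 0) := by
  have : Fact (1 ≤ ENNReal.ofReal p) := ⟨by simpa using hp⟩
  have : Fact (ENNReal.ofReal p ≠ ⊤) := ⟨ENNReal.ofReal_ne_top⟩
  let F : Lp ℂ (ENNReal.ofReal p) (volume : Measure (Fin d → ℝ)) := hf.toLp f
  have hcont : Continuous fun t : Fin d → ℝ => (DomAddAct.mk (-t)) +ᵥ F :=
    (DomAddAct.continuous_mk.comp continuous_neg).vadd continuous_const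
  have h0 : Tendsto (fun t : Fin d → ℝ => edist ((DomAddAct.mk (-t)) +ᵥ F) F) (𝓝 0) (𝓝 0) := by
    have := (hcont.edist (continuous_const (y := F))).tendsto 0
    simpa using this
  refine h0.congr fun t => ?_
  simp only [F]
  rw [DomAddAct.mk_vadd_toLp, Lp.edist_toLp_toLp]
  congr 1
  ext x
  simp [sub_eq_neg_add]

lemma tendsto_translate {d : ℕ} {p : ℝ} (hp : 1 ≤ p) {w : (Fin d → ℝ) → ℝ} (hw : IsBeurling w)
    {f : (Fin d → ℝ) → ℂ} (hf : Measurable f) (hA : amalgamNorm p 1 w f < ⊤) :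
    Tendsto (fun t : Fin d → ℝ => amalgamNorm p 1 w (fun x => f (x - t) - f x)) (𝓝 0) (𝓝 0) := by
  have hp' : 1 ≤ ENNReal.ofReal p := by simpa using hp
  simp_rw [amalgam_one]
  rw [amalgam_one] at hA
  set a : (Fin d → ℤ) → ℝ≥0∞ := fun α =>
      eLpNorm (fun x => w x • f x) (ENNReal.ofReal p) (volume.restrict (cube α)) with ha
  obtain ⟨K, hK1, hK⟩ := beurling_locbdd hw 1
  let N : Finset (Fin d → ℤ) := Fintype.piFinset fun i => {-1, 0, 1}
  let bound : (Fin d → ℤ) → ℝ≥0∞ := fun α => ENNReal.ofReal K * ∑ γ ∈ N, a (α - γ) + a α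
  simp_rw [← lintegral_count]
  have key := tendsto_lintegral_filter_of_dominated_convergence (μ := (Measure.count : Measure (Fin d → ℤ)))
    (l := 𝓝 (0 : Fin d → ℝ)) (F := fun t α => eLpNorm (fun x => w x • (f (x - t) - f x)) (ENNReal.ofReal p)
      (volume.restrict (cube α))) (f := fun _ => 0) bound ?_ ?_ ?_ ?_
  · simpa using key
  · filter_upwards with t
    exact measurable_of_countable _
  · filter_upwards [Metric.ball_mem_nhds (0 : Fin d → ℝ) one_pos] with t ht
    have ht' : ‖t‖ < 1 := by simpa using ht
    filter_upwards with α
    have hft : Measurable fun x => f (x - t) := hf.comp (measurable_id.sub_const t)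
    simp_rw [smul_sub]
    refine (eLpNorm_sub_le (hw.1.smul hft).aestronglyMeasurable
      (hw.1.smul hf).aestronglyMeasurable hp').trans ?_
    simp only [bound]
    gcongr
    refine (translate_cube_le hp hw hf t α N ?_).trans ?_
    · intro x hx
      refine ⟨fun i => α i - ⌊x i - t i⌋, ?_, ?_⟩
      · rw [Fintype.mem_piFinset]
        intro i
        have h1 := mem_cube.1 hx i
        rw [Int.floor_eq_iff] at h1
        have h2 : |t i| < 1 := (norm_le_pi_norm t i).trans_lt ht'
        rw [abs_lt] at h2
        have h4 := Int.floor_le (x i - t i)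
        have h5 := Int.lt_floor_add_one (x i - t i)
        have a1 : (-2 : ℝ) < α i - ⌊x i - t i⌋ := by linarith
        have a2 : (α i : ℝ) - ⌊x i - t i⌋ < 2 := by linarith
        have b1 : -2 < α i - ⌊x i - t i⌋ := by exact_mod_cast a1
        have b2 : α i - ⌊x i - t i⌋ < 2 := by exact_mod_cast a2
        simp only [Finset.mem_insert, Finset.mem_singleton]
        omega
      · rw [mem_cube]; intro i; simp
    · gcongr
      exact hK t ht'.le
    exact le_rfl
  · rw [lintegral_count]
    simp only [bound]
    rw [ENNReal.tsum_add, ENNReal.tsum_mul_left, tsum_shift]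
    refine ENNReal.add_ne_top.2 ⟨ENNReal.mul_ne_top ENNReal.ofReal_ne_top
      (ENNReal.mul_ne_top (ENNReal.natCast_ne_top _) hA.ne), hA.ne⟩
  · filter_upwards with α
    obtain ⟨K', hK1', hK'⟩ := beurling_locbdd hw (∑ i, (|(α i : ℝ)| + 1))
    have hx : ∀ x ∈ cube α, w x ≤ K' := by
      intro x hx
      apply hK'
      refine (pi_norm_le_iff_of_nonneg (by positivity)).2 fun i => ?_
      have h1 := mem_cube.1 hx i
      rw [Int.floor_eq_iff] at h1
      have h2 : |x i| ≤ |(α i : ℝ)| + 1 := by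
        have : |x i - α i| ≤ 1 := abs_le.2 ⟨by linarith, by linarith⟩
        have := abs_sub_abs_le_abs_sub (x i) (α i)
        linarith
      exact h2.trans (Finset.single_le_sum (f := fun i => |(α i : ℝ)| + 1) (fun i _ => by positivity) (Finset.mem_univ i))
    have hlim := ENNReal.Tendsto.const_mul (a := ENNReal.ofReal K')
      (tendsto_translate_Lp hp (memLp_of_amalgam hp hw hf (by rw [amalgam_one]; exact hA)))
      (Or.inr ENNReal.ofReal_ne_top)
    rw [mul_zero] at hlim
    refine tendsto_of_tendsto_of_tendsto_of_le_of_le tendsto_const_nhds hlim (fun _ => zero_le) (fun t => ?_)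
    calc eLpNorm (fun x => w x • (f (x - t) - f x)) (ENNReal.ofReal p) (volume.restrict (cube α))
        ≤ eLpNorm (K' • fun x => (f (x - t) - f x)) (ENNReal.ofReal p) (volume.restrict (cube α)) := by
          apply eLpNorm_mono_ae
          filter_upwards [ae_restrict_mem (measurableSet_cube α)] with x hxx
          have := hx x hxx
          have h0 := hw.2.1 x
          simp only [Pi.smul_apply]
          rw [norm_smul, norm_smul, Real.norm_of_nonneg (by linarith), Real.norm_of_nonneg (by linarith)]
          gcongr
      _ ≤ eLpNorm (K' • fun x => (f (x - t) - f x)) (ENNReal.ofReal p) volume :=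
          eLpNorm_mono_measure _ Measure.restrict_le_self
      _ ≤ _ := by
          refine (eLpNorm_const_smul_le).trans ?_
          rw [Real.enorm_of_nonneg (by linarith)]

lemma measurable_translate {d : ℕ} {p : ℝ} (hp : 1 ≤ p) {w : (Fin d → ℝ) → ℝ} (hw : Measurable w)
    {f : (Fin d → ℝ) → ℂ} (hf : Measurable f) (c : ℝ) (α : Fin d → ℤ) :
    Measurable fun t : Fin d → ℝ => eLpNorm (fun x => w x • (f (x - c • t) - f x)) (ENNReal.ofReal p)
      (volume.restrict (cube α)) := by
  simp_rw [eLpNorm_real hp]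
  apply Measurable.pow_const
  refine Measurable.lintegral_prod_right' (f := fun z : (Fin d → ℝ) × (Fin d → ℝ) =>
    ‖w z.2 • (f (z.2 - c • z.1) - f z.2)‖ₑ ^ p) ?_
  fun_prop

lemma integral_dil {d : ℕ} (F : (Fin d → ℝ) → ℂ) {c : ℝ} (hc : 0 < c) :
    ∫ x : Fin d → ℝ, (c : ℂ) ^ d * F (c • x) = ∫ x, F x := by
  rw [integral_const_mul, Measure.integral_comp_smul_of_nonneg volume F c (hR := hc.le)]
  rw [Complex.real_smul, ← mul_assoc]
  have : (c : ℂ) ≠ 0 := by exact_mod_cast hc.ne'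
  simp [this]

noncomputable def dil {d : ℕ} (h : (Fin d → ℝ) → ℂ) (c : ℝ) (x : Fin d → ℝ) : ℂ := (c : ℂ) ^ d * h (c • x)

lemma fourierT_dil {d : ℕ} (h : (Fin d → ℝ) → ℂ) {c : ℝ} (hc : 0 < c) (ξ : Fin d → ℝ) :
    fourierT (dil h c) ξ = fourierT h (c⁻¹ • ξ) := by
  unfold fourierT
  refine Eq.trans ?_ (integral_dil _ hc)
  congr 1
  ext x
  have : (c : ℂ) ≠ 0 := by exact_mod_cast hc.ne'
  have e : ∑ i, (((c • x) i : ℝ) : ℂ) * (((c⁻¹ • ξ) i : ℝ) : ℂ) = ∑ i, (x i : ℂ) * (ξ i : ℂ) := by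
    apply Finset.sum_congr rfl
    intro i _
    simp only [Pi.smul_apply, smul_eq_mul]
    push_cast
    field_simp
  rw [e]
  unfold dil
  ring

lemma convF_dil {d : ℕ} (h f : (Fin d → ℝ) → ℂ) {c : ℝ} (hc : 0 < c) (x : Fin d → ℝ) :
    convF (dil h c) f x = ∫ y, h y * f (x - c⁻¹ • y) := by
  unfold convF
  refine Eq.trans ?_ (integral_dil _ hc)
  refine Eq.trans ?_ (integral_sub_left_eq_self _ volume x)
  congr 1
  ext t
  unfold dil
  rw [smul_smul, inv_mul_cancel₀ hc.ne', one_smul, sub_sub_cancel]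
  ring

lemma norm_echar {d : ℕ} (x ξ : Fin d → ℝ) :
    ‖Complex.exp (-(2 * (Real.pi : ℂ) * Complex.I * ∑ i, (x i : ℂ) * (ξ i : ℂ)))‖ = 1 := by
  have : -(2 * (Real.pi : ℂ) * Complex.I * ∑ i, (x i : ℂ) * (ξ i : ℂ))
      = ((-(2 * Real.pi * ∑ i, x i * ξ i) : ℝ) : ℂ) * Complex.I := by
    push_cast; ring
  rw [this, Complex.norm_exp_ofReal_mul_I]

lemma norm_fourierT_le {d : ℕ} (h : (Fin d → ℝ) → ℂ) (ξ : Fin d → ℝ) :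
    ‖fourierT h ξ‖ ≤ ∫ x, ‖h x‖ := by
  unfold fourierT
  refine (norm_integral_le_integral_norm _).trans (le_of_eq ?_)
  simp_rw [norm_mul, norm_echar, one_mul]

lemma measurable_fourierT {d : ℕ} {h : (Fin d → ℝ) → ℂ} (hh : Measurable h) : Measurable (fourierT h) := by
  unfold fourierT
  apply StronglyMeasurable.measurable
  apply StronglyMeasurable.integral_prod_right' (f := fun z : (Fin d → ℝ) × (Fin d → ℝ) =>
    Complex.exp (-(2 * (Real.pi : ℂ) * Complex.I * ∑ i, (z.2 i : ℂ) * (z.1 i : ℂ))) * h z.2)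
  apply Measurable.stronglyMeasurable
  fun_prop

lemma integrable_echar {d : ℕ} {h : (Fin d → ℝ) → ℂ} (hh : Integrable h) (ξ : Fin d → ℝ) :
    Integrable fun x : Fin d → ℝ =>
      Complex.exp (-(2 * (Real.pi : ℂ) * Complex.I * ∑ i, (x i : ℂ) * (ξ i : ℂ))) * h x := by
  refine hh.bdd_mul (c := 1) ?_ ?_
  · apply Continuous.aestronglyMeasurable
    fun_prop
  · filter_upwards with x
    exact (norm_echar x ξ).le

lemma fourierT_sub {d : ℕ} {h g : (Fin d → ℝ) → ℂ} (hh : Integrable h) (hg : Integrable g) (ξ : Fin d → ℝ) :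
    fourierT (fun x => h x - g x) ξ = fourierT h ξ - fourierT g ξ := by
  unfold fourierT
  rw [← integral_sub (integrable_echar hh ξ) (integrable_echar hg ξ)]
  simp_rw [mul_sub]

lemma convF_eq {d : ℕ} (h f : (Fin d → ℝ) → ℂ) :
    convF h f = convolution f h (ContinuousLinearMap.mul ℝ ℂ) volume := by
  ext x
  unfold convF convolution
  simp [mul_comm]

lemma fourierT_conv {d : ℕ} {h f : (Fin d → ℝ) → ℂ} (hh : Integrable h) (hf : Integrable f) (ξ : Fin d → ℝ) :
    fourierT (convF h f) ξ = fourierT h ξ * fourierT f ξ := by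
  have key := integral_convolution (ContinuousLinearMap.mul ℝ ℂ) (integrable_echar hf ξ) (integrable_echar hh ξ)
  rw [← convF_eq] at key
  simp only [ContinuousLinearMap.mul_apply'] at key
  unfold fourierT
  refine Eq.trans ?_ (key.trans (mul_comm _ _))
  congr 1
  ext x
  unfold convF
  rw [← integral_const_mul]
  congr 1
  ext t
  have : Complex.exp (-(2 * (Real.pi : ℂ) * Complex.I * ∑ i, (x i : ℂ) * (ξ i : ℂ))) =
    Complex.exp (-(2 * (Real.pi : ℂ) * Complex.I * ∑ i, ((x - t) i : ℂ) * (ξ i : ℂ))) *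
    Complex.exp (-(2 * (Real.pi : ℂ) * Complex.I * ∑ i, (t i : ℂ) * (ξ i : ℂ))) := by
    rw [← Complex.exp_add]
    congr 1
    rw [← neg_add, ← mul_add, ← Finset.sum_add_distrib]
    congr 3
    ext i
    simp only [Pi.sub_apply]
    push_cast
    ring
  rw [this]
  ring

lemma integrable_convF {d : ℕ} {h f : (Fin d → ℝ) → ℂ} (hh : Integrable h) (hf : Integrable f) :
    Integrable (convF h f) := by
  rw [convF_eq]
  exact hf.integrable_convolution _ hh

lemma integrable_dil {d : ℕ} {h : (Fin d → ℝ) → ℂ} (hh : Integrable h) {c : ℝ} (hc : 0 < c) :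
    Integrable (dil h c) := by
  unfold dil
  exact (hh.comp_smul hc.ne').const_mul _

lemma conv_pointwise {d : ℕ} {w : (Fin d → ℝ) → ℝ} (hw : IsBeurling w)
    {f h : (Fin d → ℝ) → ℂ} (hf : Measurable f) (hh : Measurable h) (hhi : Integrable h)
    (h1 : ∫ y, h y = 1) {c : ℝ} (hc : 0 < c) (x : Fin d → ℝ) :
    ‖w x • (convF (dil h c) f x - f x)‖ₑ ≤
      ∫⁻ y, ‖h y‖ₑ * ‖w x • (f (x - c⁻¹ • y) - f x)‖ₑ := by
  have hw1 := hw.2.1 x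
  have e : ∫⁻ y, ‖h y‖ₑ * ‖w x • (f (x - c⁻¹ • y) - f x)‖ₑ =
      ‖w x‖ₑ * ∫⁻ y, ‖h y * (f (x - c⁻¹ • y) - f x)‖ₑ := by
    rw [← lintegral_const_mul]
    · congr 1
      ext y
      rw [enorm_smul, enorm_mul]
      ring
    · fun_prop
  have hw0 : ‖w x‖ₑ ≠ 0 := by
    rw [enorm_ne_zero]; linarith
  rw [e]
  by_cases hG : Integrable fun y => h y * (f (x - c⁻¹ • y) - f x)
  · have h2 : Integrable fun y => h y * f x := hhi.mul_const _
    have h3 : Integrable fun y => h y * f (x - c⁻¹ • y) := by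
      refine (hG.add h2).congr ?_
      filter_upwards with y
      simp only [Pi.add_apply]; ring
    have h4 : ∫ y, h y * (f (x - c⁻¹ • y) - f x) = convF (dil h c) f x - f x := by
      rw [convF_dil _ _ hc]
      simp_rw [mul_sub]
      rw [integral_sub h3 h2, integral_mul_const, h1, one_mul]
    rw [← h4, enorm_smul]
    gcongr
    exact enorm_integral_le_lintegral_enorm _
  · have : ∫⁻ y, ‖h y * (f (x - c⁻¹ • y) - f x)‖ₑ = ⊤ := by
      by_contra hne
      apply hG
      refine ⟨?_, lt_top_iff_ne_top.2 hne⟩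
      apply Measurable.aestronglyMeasurable
      fun_prop
    rw [this, ENNReal.mul_top hw0]
    exact le_top

lemma conv_bound {d : ℕ} {p : ℝ} (hp : 1 ≤ p) {w : (Fin d → ℝ) → ℝ} (hw : IsBeurling w)
    {f h : (Fin d → ℝ) → ℂ} (hf : Measurable f) (hh : Measurable h) (hhi : Integrable h)
    (h1 : ∫ y, h y = 1) {c : ℝ} (hc : 0 < c) :
    amalgamNorm p 1 w (fun x => convF (dil h c) f x - f x) ≤
      ∫⁻ y, ‖h y‖ₑ * amalgamNorm p 1 w (fun x => f (x - c⁻¹ • y) - f x) := by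
  have hp0 : 0 < p := by linarith
  have hwm := hw.1
  simp_rw [amalgam_one, ← ENNReal.tsum_mul_left]
  rw [lintegral_tsum]
  swap
  · intro α
    exact (hh.enorm.mul (measurable_translate hp hwm hf c⁻¹ α)).aemeasurable
  apply ENNReal.tsum_le_tsum
  intro α
  let F : (Fin d → ℝ) → (Fin d → ℝ) → ℝ≥0∞ := fun y x => ‖h y‖ₑ * ‖w x • (f (x - c⁻¹ • y) - f x)‖ₑ
  have hF : Measurable (Function.uncurry F) := by
    simp only [F, Function.uncurry_def]
    fun_prop
  rw [eLpNorm_real hp]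
  calc _ ≤ (∫⁻ x in cube α, (∫⁻ y, F y x) ^ p) ^ (1 / p) := by
        gcongr with x
        exact conv_pointwise hw hf hh hhi h1 hc x
    _ ≤ ∫⁻ y, (∫⁻ x in cube α, (F y x) ^ p) ^ (1 / p) :=
        minkowski_lintegral volume (volume.restrict (cube α)) hp F hF
    _ = _ := by
        congr 1
        ext y
        rw [eLpNorm_real hp]
        simp only [F]
        simp_rw [ENNReal.mul_rpow_of_nonneg _ _ hp0.le]
        rw [lintegral_const_mul]
        · rw [ENNReal.mul_rpow_of_nonneg _ _ (by positivity), ← ENNReal.rpow_mul, one_div,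
            mul_inv_cancel₀ hp0.ne', ENNReal.rpow_one]
        · fun_prop

lemma first_tendsto {d : ℕ} {p : ℝ} (hp : 1 ≤ p) {w : (Fin d → ℝ) → ℝ} (hw : IsBeurling w)
    {f h : (Fin d → ℝ) → ℂ} (hf : Measurable f) (hA : amalgamNorm p 1 w f < ⊤)
    (hh : Measurable h) (hhi : Integrable h)
    (h1 : ∫ y, h y = 1) (D : ℝ) (hD : 0 < D)
    (hb : ∀ s y : Fin d → ℝ, (∀ i, |s i| ≤ |y i|) → ‖h y‖ * w s ≤ D * gker y) :
    Tendsto (fun n : ℕ => amalgamNorm p 1 w (fun x => convF (dil h ((n : ℝ) + 1)) f x - f x))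
      atTop (𝓝 0) := by
  have hcpos : ∀ n : ℕ, (0 : ℝ) < (n : ℝ) + 1 := fun n => by positivity
  have key := tendsto_lintegral_filter_of_dominated_convergence (μ := (volume : Measure (Fin d → ℝ)))
    (l := (atTop : Filter ℕ)) (F := fun n y => ‖h y‖ₑ * amalgamNorm p 1 w (fun x => f (x - ((n : ℝ) + 1)⁻¹ • y) - f x))
    (f := fun _ => 0)
    (fun y => ENNReal.ofReal (D * gker y) * (2 ^ d * amalgamNorm p 1 w f + amalgamNorm p 1 w f)) ?_ ?_ ?_ ?_
  · rw [lintegral_zero] at key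
    exact tendsto_of_tendsto_of_tendsto_of_le_of_le tendsto_const_nhds key (fun _ => zero_le)
      (fun n => conv_bound hp hw hf hh hhi h1 (hcpos n))
  · filter_upwards with n
    refine hh.enorm.mul ?_
    simp_rw [amalgam_one]
    exact Measurable.ennreal_tsum fun α => measurable_translate hp hw.1 hf _ α
  · filter_upwards with n
    filter_upwards with y
    set t := ((n : ℝ) + 1)⁻¹ • y with ht
    have hft : Measurable fun x => f (x - t) := hf.comp (measurable_id.sub_const t)
    have hty : ∀ i, |t i| ≤ |y i| := by
      intro i
      simp only [ht, Pi.smul_apply, smul_eq_mul]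
      rw [abs_mul, abs_of_pos (inv_pos.2 (hcpos n))]
      apply mul_le_of_le_one_left (abs_nonneg _)
      apply inv_le_one_of_one_le₀
      have : (0 : ℝ) ≤ n := Nat.cast_nonneg n
      linarith
    have w1 := hw.2.1 t
    have e1 : ‖h y‖ₑ * ENNReal.ofReal (w t) ≤ ENNReal.ofReal (D * gker y) := by
      rw [← ofReal_norm_eq_enorm, ← ENNReal.ofReal_mul (norm_nonneg _)]
      exact ENNReal.ofReal_le_ofReal (hb t y hty)
    have e2 : ‖h y‖ₑ ≤ ‖h y‖ₑ * ENNReal.ofReal (w t) := by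
      apply le_mul_of_one_le_right zero_le
      simpa using w1
    calc _ ≤ ‖h y‖ₑ * (ENNReal.ofReal (w t) * (2 ^ d * amalgamNorm p 1 w f) + amalgamNorm p 1 w f) := by
          gcongr
          refine (amalgam_sub_le hp hw.1 hft hf).trans ?_
          gcongr
          exact translate_le hp hw hf t
      _ = (‖h y‖ₑ * ENNReal.ofReal (w t)) * (2 ^ d * amalgamNorm p 1 w f) + ‖h y‖ₑ * amalgamNorm p 1 w f := by
          ring
      _ ≤ ENNReal.ofReal (D * gker y) * (2 ^ d * amalgamNorm p 1 w f) +
            ENNReal.ofReal (D * gker y) * amalgamNorm p 1 w f := by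
          gcongr
          exact e2.trans e1
      _ = _ := by ring
  · rw [lintegral_mul_const]
    · apply ENNReal.mul_ne_top
      · have : Integrable fun y : Fin d → ℝ => D * gker y := gker_integrable.const_mul D
        have := this.lintegral_lt_top
        exact this.ne
      · exact ENNReal.add_ne_top.2 ⟨ENNReal.mul_ne_top (by simp) hA.ne, hA.ne⟩
    · exact (gker_measurable.const_mul D).ennreal_ofReal
  · filter_upwards with y
    have ht : Tendsto (fun n : ℕ => ((n : ℝ) + 1)⁻¹ • y) atTop (𝓝 0) := by
      have : Tendsto (fun n : ℕ => ((n : ℝ) + 1)⁻¹) atTop (𝓝 0) := by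
        simpa [one_div] using tendsto_one_div_add_atTop_nhds_zero_nat (𝕜 := ℝ)
      simpa using this.smul_const y
    have := ENNReal.Tendsto.const_mul (a := ‖h y‖ₑ) ((tendsto_translate hp hw hf hA).comp ht)
      (Or.inr enorm_ne_top)
    rw [mul_zero] at this
    exact this

lemma cube_bound {d : ℕ} {α : Fin d → ℤ} {x : Fin d → ℝ} (hx : x ∈ cube α) :
    ‖x‖ ≤ ∑ i, (|(α i : ℝ)| + 1) := by
  refine (pi_norm_le_iff_of_nonneg (by positivity)).2 fun i => ?_
  have h1 := mem_cube.1 hx i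
  rw [Int.floor_eq_iff] at h1
  have h2 : |x i| ≤ |(α i : ℝ)| + 1 := by
    have : |x i - α i| ≤ 1 := abs_le.2 ⟨by linarith, by linarith⟩
    have := abs_sub_abs_le_abs_sub (x i) (α i)
    linarith
  exact h2.trans (Finset.single_le_sum (f := fun i => |(α i : ℝ)| + 1) (fun i _ => by positivity) (Finset.mem_univ i))

lemma second_tendsto {d : ℕ} {q r : ℝ} (hr : 1 ≤ r) (w : (Fin d → ℝ) → ℝ)
    (F : (Fin d → ℝ) → ℂ) (hA : amalgamNorm q r w F < ⊤) (G : ℕ → (Fin d → ℝ) → ℂ) (C : ℝ)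
    (hG : ∀ n ξ, ‖G n ξ‖ ≤ C * ‖F ξ‖) (hG0 : ∀ (n : ℕ) ξ, ‖ξ‖ ≤ n → G n ξ = 0) :
    Tendsto (fun n : ℕ => amalgamNorm q r w (G n)) atTop (𝓝 0) := by
  have hr0 : 0 < r := by linarith
  unfold amalgamNorm
  have hA' : ∑' α : Fin d → ℤ,
      (eLpNorm (fun x => w x • F x) (ENNReal.ofReal q) (volume.restrict (cube α))) ^ r ≠ ⊤ := by
    intro h
    unfold amalgamNorm at hA
    rw [h, ENNReal.top_rpow_of_pos (by positivity)] at hA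
    exact lt_irrefl _ hA
  have key := tendsto_lintegral_filter_of_dominated_convergence (μ := (Measure.count : Measure (Fin d → ℤ)))
    (l := (atTop : Filter ℕ)) (F := fun n α =>
      (eLpNorm (fun x => w x • G n x) (ENNReal.ofReal q) (volume.restrict (cube α))) ^ r) (f := fun _ => 0)
    (fun α => (ENNReal.ofReal C) ^ r *
      (eLpNorm (fun x => w x • F x) (ENNReal.ofReal q) (volume.restrict (cube α))) ^ r) ?_ ?_ ?_ ?_
  · simp only [lintegral_count, tsum_zero] at key
    have := (ENNReal.continuous_rpow_const (y := 1 / r)).tendsto 0 |>.comp key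
    rw [ENNReal.zero_rpow_of_pos (by positivity)] at this
    exact this
  · filter_upwards with n
    exact measurable_of_countable _
  · filter_upwards with n
    filter_upwards with α
    rw [← ENNReal.mul_rpow_of_nonneg _ _ hr0.le]
    gcongr
    apply eLpNorm_le_mul_eLpNorm_of_ae_le_mul
    filter_upwards with x
    rw [norm_smul, norm_smul]
    calc _ ≤ ‖w x‖ * (C * ‖F x‖) := by gcongr; exact hG n x
      _ = _ := by ring
  · rw [lintegral_count, ENNReal.tsum_mul_left]
    exact ENNReal.mul_ne_top (ENNReal.rpow_ne_top_of_nonneg hr0.le ENNReal.ofReal_ne_top) hA'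
  · filter_upwards with α
    apply tendsto_const_nhds.congr'
    obtain ⟨N, hN⟩ := exists_nat_ge (∑ i, (|(α i : ℝ)| + 1))
    filter_upwards [eventually_ge_atTop N] with n hn
    symm
    have : eLpNorm (fun x => w x • G n x) (ENNReal.ofReal q) (volume.restrict (cube α)) =
        eLpNorm (fun x => (0 : ℂ)) (ENNReal.ofReal q) (volume.restrict (cube α)) := by
      apply eLpNorm_congr_ae
      filter_upwards [ae_restrict_mem (measurableSet_cube α)] with x hx
      rw [hG0 n x, smul_zero]
      refine (cube_bound hx).trans (hN.trans ?_)
      exact_mod_cast hn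
    rw [this, eLpNorm_zero', ENNReal.zero_rpow_of_pos hr0]

lemma amalgam_of_bdd {d : ℕ} {q r : ℝ} (hr : 1 ≤ r) {w : (Fin d → ℝ) → ℝ} (hw : IsBeurling w)
    (H : (Fin d → ℝ) → ℂ) (C R : ℝ) (hC : ∀ ξ, ‖H ξ‖ ≤ C) (hR : ∀ ξ, R < ‖ξ‖ → H ξ = 0) :
    amalgamNorm q r w H < ⊤ := by
  have hr0 : 0 < r := by linarith
  obtain ⟨K, hK1, hK⟩ := beurling_locbdd hw R
  have hC0 : 0 ≤ C := (norm_nonneg _).trans (hC 0)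
  have hb : ∀ x, ‖w x • H x‖ ≤ K * C := by
    intro x
    by_cases hx : R < ‖x‖
    · rw [hR x hx, smul_zero, norm_zero]; positivity
    · have := hw.2.1 x
      rw [norm_smul, Real.norm_of_nonneg (by linarith)]
      gcongr
      · exact hK x (not_lt.1 hx)
      · exact hC x
  unfold amalgamNorm
  apply ENNReal.rpow_lt_top_of_nonneg (by positivity)
  let M : ℤ := ⌈R⌉ + 1
  let N : Finset (Fin d → ℤ) := Fintype.piFinset fun _ => Finset.Icc (-M) M
  rw [tsum_eq_sum (s := N)]
  · refine (ENNReal.sum_lt_top.2 fun α _ => ?_).ne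
    apply ENNReal.rpow_lt_top_of_nonneg hr0.le
    refine ne_top_of_le_ne_top ?_ (eLpNorm_le_of_ae_bound (C := K * C) (ae_of_all _ hb))
    simp
  · intro α hα
    have : eLpNorm (fun x => w x • H x) (ENNReal.ofReal q) (volume.restrict (cube α)) =
        eLpNorm (fun x => (0 : ℂ)) (ENNReal.ofReal q) (volume.restrict (cube α)) := by
      apply eLpNorm_congr_ae
      filter_upwards [ae_restrict_mem (measurableSet_cube α)] with x hx
      rw [hR x, smul_zero]
      by_contra hcon
      apply hα
      rw [Fintype.mem_piFinset]
      intro i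
      have h1 := mem_cube.1 hx i
      rw [Int.floor_eq_iff] at h1
      have h2 : |x i| ≤ R := (norm_le_pi_norm x i).trans (not_lt.1 hcon)
      rw [abs_le] at h2
      have h3 := Int.le_ceil R
      rw [Finset.mem_Icc]
      have a1 : (-(⌈R⌉ + 1) : ℝ) ≤ α i := by linarith
      have a2 : (α i : ℝ) ≤ ⌈R⌉ + 1 := by linarith
      exact ⟨by exact_mod_cast a1, by exact_mod_cast a2⟩
    rw [this, eLpNorm_zero', ENNReal.zero_rpow_of_pos hr0]

/-- if `ϑ₁` satisfies the Beurling–Domar condition then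
`A^{p,1,q,r}_{ϑ₁,ϑ₂}(ℝ^d)` has an approximate unit with compactly supported
Fourier transforms. -/
theorem A_approximate_unit {d : ℕ} (p q r : ℝ) (hp : 1 ≤ p) (hq : 1 ≤ q) (hr : 1 ≤ r)
    (ϑ₁ ϑ₂ : (Fin d → ℝ) → ℝ) (h1 : IsBeurling ϑ₁) (h2 : IsBeurling ϑ₂)
    (hBD : BeurlingDomar ϑ₁)
    (f : (Fin d → ℝ) → ℂ) (hf : MemA p q r ϑ₁ ϑ₂ f) (ε : ℝ) (hε : 0 < ε) :
    ∃ h : (Fin d → ℝ) → ℂ, MemA p q r ϑ₁ ϑ₂ h ∧ HasCompactSupport (fourierT h) ∧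
      ANorm p q r ϑ₁ ϑ₂ (fun x => convF h f x - f x) < ENNReal.ofReal ε := by
  obtain ⟨⟨hfm, hfA⟩, -, hFA⟩ := hf
  obtain ⟨h, D, R, hh, hD, hR, hb, hone, hzero⟩ := exists_hd h1 hBD
  have hcpos : ∀ n : ℕ, (0 : ℝ) < (n : ℝ) + 1 := fun n => by positivity
  have hfi : Integrable f := integrable_of_amalgam hp h1 hfm hfA
  have hhi : Integrable h := by
    refine (gker_integrable.const_mul D).mono' hh.aestronglyMeasurable ?_
    filter_upwards with y
    exact (le_mul_of_one_le_right (norm_nonneg _) (h1.2.1 y)).trans (hb y y fun _ => le_rfl)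
  have hintegral : ∫ y, h y = 1 := by
    have := hone 0 (by simp)
    simpa [fourierT] using this
  have hnorm : ∀ (n : ℕ) (ξ : Fin d → ℝ), ‖((n : ℝ) + 1)⁻¹ • ξ‖ = ‖ξ‖ / ((n : ℝ) + 1) := by
    intro n ξ
    rw [norm_smul, norm_inv, Real.norm_of_nonneg (hcpos n).le]
    field_simp
  have hFn0 : ∀ (n : ℕ) (ξ : Fin d → ℝ), R * ((n : ℝ) + 1) < ‖ξ‖ → fourierT (dil h ((n : ℝ) + 1)) ξ = 0 := by
    intro n ξ hξ
    rw [fourierT_dil h (hcpos n)]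
    apply hzero
    rw [hnorm]
    rwa [lt_div_iff₀ (hcpos n)]
  have hFn1 : ∀ (n : ℕ) (ξ : Fin d → ℝ), ‖ξ‖ ≤ n → fourierT (dil h ((n : ℝ) + 1)) ξ = 1 := by
    intro n ξ hξ
    rw [fourierT_dil h (hcpos n)]
    apply hone
    rw [hnorm, div_le_one (hcpos n)]
    linarith
  have hFnb : ∀ (n : ℕ) (ξ : Fin d → ℝ), ‖fourierT (dil h ((n : ℝ) + 1)) ξ‖ ≤ ∫ x, ‖h x‖ := by
    intro n ξ
    rw [fourierT_dil h (hcpos n)]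
    exact norm_fourierT_le _ _
  have t1 := first_tendsto hp h1 hfm hfA hh hhi hintegral D hD hb
  have hFT : ∀ n : ℕ, fourierT (fun x => convF (dil h ((n : ℝ) + 1)) f x - f x) =
      fun ξ => (fourierT (dil h ((n : ℝ) + 1)) ξ - 1) * fourierT f ξ := by
    intro n
    ext ξ
    have hi := integrable_dil hhi (hcpos n)
    rw [fourierT_sub (integrable_convF hi hfi) hfi, fourierT_conv hi hfi]
    ring
  have t2 := second_tendsto (q := q) hr ϑ₂ (fourierT f) hFA
    (fun n => fourierT (fun x => convF (dil h ((n : ℝ) + 1)) f x - f x)) ((∫ x, ‖h x‖) + 1)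
    (by
      intro n ξ
      rw [hFT, norm_mul]
      gcongr
      refine (norm_sub_le _ _).trans ?_
      rw [norm_one]
      gcongr
      exact hFnb n ξ)
    (by
      intro n ξ hξ
      rw [hFT]
      simp only
      rw [hFn1 n ξ hξ, sub_self, zero_mul])
  have t3 := t1.add t2
  rw [add_zero] at t3
  obtain ⟨n, hn⟩ := (t3.eventually_lt_const (ENNReal.ofReal_pos.2 hε)).exists
  have hdm : Measurable (dil h ((n : ℝ) + 1)) := by
    unfold dil
    fun_prop
  refine ⟨dil h ((n : ℝ) + 1), ⟨⟨hdm, ?_⟩, measurable_fourierT hdm, ?_⟩, ?_, hn⟩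
  · refine amalgam_of_gker _ _ (((n : ℝ) + 1) ^ d * D) (by positivity) ?_
    intro x
    have hxx : ∀ i, |x i| ≤ |(((n : ℝ) + 1) • x) i| := by
      intro i
      simp only [Pi.smul_apply, smul_eq_mul]
      rw [abs_mul, abs_of_pos (hcpos n)]
      apply le_mul_of_one_le_left (abs_nonneg _)
      have : (0 : ℝ) ≤ n := Nat.cast_nonneg n
      linarith
    have w1 := h1.2.1 x
    have hc' : ‖(((n : ℝ) + 1 : ℝ) : ℂ)‖ = (n : ℝ) + 1 := by
      rw [Complex.norm_real, Real.norm_of_nonneg (hcpos n).le]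
    have hg : gker (((n : ℝ) + 1) • x) ≤ gker x := by
      unfold gker
      apply Finset.prod_le_prod
      · intro i _; positivity
      · intro i _
        have := sq_le_sq.2 (hxx i)
        gcongr
    unfold dil
    rw [norm_smul, norm_mul, norm_pow, hc', Real.norm_of_nonneg (by linarith)]
    calc ϑ₁ x * (((n : ℝ) + 1) ^ d * ‖h (((n : ℝ) + 1) • x)‖)
        = ((n : ℝ) + 1) ^ d * (‖h (((n : ℝ) + 1) • x)‖ * ϑ₁ x) := by ring
      _ ≤ ((n : ℝ) + 1) ^ d * (D * gker (((n : ℝ) + 1) • x)) :=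
          mul_le_mul_of_nonneg_left (hb _ _ hxx) (by positivity)
      _ ≤ ((n : ℝ) + 1) ^ d * (D * gker x) := by gcongr
      _ = _ := by ring
  · exact amalgam_of_bdd hr h2 _ _ _ (hFnb n) (hFn0 n)
  · refine HasCompactSupport.intro (isCompact_closedBall (0 : Fin d → ℝ) (R * ((n : ℝ) + 1))) ?_
    intro ξ hξ
    apply hFn0
    simpa using hξ
end

section
/- Let ϑ₁, ϑ₂ be Beurling weights on ℝ^d and 1 ≤ p₁, p₂, q, r₁, r₂ < ∞. If p₂ ≤ p₁ and r₁ ≤ r₂, then A^{p₁,1,q,r₁}_{ϑ₁,ϑ₂}(ℝ^d) is continuously embedded in A^{p₂,1,q,r₂}_{ϑ₁,ϑ₂}(ℝ^d): every f ∈ A^{p₁,1,q,r₁}_{ϑ₁,ϑ₂}(ℝ^d) belongs to A^{p₂,1,q,r₂}_{ϑ₁,ϑ₂}(ℝ^d) and there exists C > 0 (independent of f) with ‖f‖_{A^{p₂,1,q,r₂}_{ϑ₁,ϑ₂}} ≤ C·‖f‖_{A^{p₁,1,q,r₁}_{ϑ₁,ϑ₂}}. -/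
open MeasureTheory Filter Topology
open scoped ENNReal NNReal BigOperators

theorem aux_lr {ι : Type*} (a : ι → ℝ≥0∞) (r s : ℝ) (hr : 0 < r) (h : r ≤ s) :
    (∑' i, a i ^ s) ^ (1 / s) ≤ (∑' i, a i ^ r) ^ (1 / r) := by
  have hs : 0 < s := hr.trans_le h
  set T := ∑' i, a i ^ r with hT
  have hle : ∀ i, a i ^ r ≤ T := fun i => ENNReal.le_tsum i
  have key : ∑' i, a i ^ s ≤ T ^ (s / r) := by
    calc ∑' i, a i ^ s ≤ ∑' i, a i ^ r * T ^ ((s - r) / r) := by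
          refine ENNReal.tsum_le_tsum fun i => ?_
          have e : a i ^ s = a i ^ r * (a i ^ r) ^ ((s - r) / r) := by
            rw [← ENNReal.rpow_mul, ← ENNReal.rpow_add_of_nonneg _ _ hr.le]
            · congr 1; field_simp; ring
            · have : r * ((s - r) / r) = s - r := by field_simp
              linarith
          rw [e]
          gcongr
          · exact hle i
      _ = T * T ^ ((s - r) / r) := ENNReal.tsum_mul_right
      _ = T ^ (1 : ℝ) * T ^ ((s - r) / r) := by rw [ENNReal.rpow_one]
      _ = T ^ (s / r) := by
          rw [← ENNReal.rpow_add_of_nonneg _ _ zero_le_one (div_nonneg (by linarith) hr.le)]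
          congr 1; field_simp; ring
  calc (∑' i, a i ^ s) ^ (1 / s) ≤ (T ^ (s / r)) ^ (1 / s) :=
        ENNReal.rpow_le_rpow key (by positivity)
    _ = T ^ (1 / r) := by
        rw [← ENNReal.rpow_mul]; congr 1; field_simp

theorem aux_cube {d : ℕ} (α : Fin d → ℤ) : IsProbabilityMeasure
    ((volume : Measure (Fin d → ℝ)).restrict (cube α)) := by
  constructor
  rw [Measure.restrict_apply_univ, cube, volume_pi_pi]
  simp

/-- if `p₂ ≤ p₁` and `r₁ ≤ r₂` then
`A^{p₁,1,q,r₁}_{ϑ₁,ϑ₂}(ℝ^d) ↪ A^{p₂,1,q,r₂}_{ϑ₁,ϑ₂}(ℝ^d)` continuously. -/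
theorem A_embedding_exponents {d : ℕ} (p₁ p₂ q r₁ r₂ : ℝ)
    (hp₁ : 1 ≤ p₁) (hp₂ : 1 ≤ p₂) (hq : 1 ≤ q) (hr₁ : 1 ≤ r₁) (hr₂ : 1 ≤ r₂)
    (hp : p₂ ≤ p₁) (hr : r₁ ≤ r₂)
    (ϑ₁ ϑ₂ : (Fin d → ℝ) → ℝ) (h1 : IsBeurling ϑ₁) (h2 : IsBeurling ϑ₂) :
    ∃ C : ℝ, 0 < C ∧ ∀ f : (Fin d → ℝ) → ℂ, MemA p₁ q r₁ ϑ₁ ϑ₂ f →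
      MemA p₂ q r₂ ϑ₁ ϑ₂ f ∧
      ANorm p₂ q r₂ ϑ₁ ϑ₂ f ≤ ENNReal.ofReal C * ANorm p₁ q r₁ ϑ₁ ϑ₂ f := by
  refine ⟨1, one_pos, fun f hf => ?_⟩
  obtain ⟨⟨hm, hfin⟩, hm', hfin'⟩ := hf
  have A : amalgamNorm p₂ 1 ϑ₁ f ≤ amalgamNorm p₁ 1 ϑ₁ f := by
    unfold amalgamNorm
    refine ENNReal.rpow_le_rpow (ENNReal.tsum_le_tsum fun α =>
      ENNReal.rpow_le_rpow ?_ zero_le_one) (by norm_num)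
    have := aux_cube α
    exact eLpNorm_le_eLpNorm_of_exponent_le (ENNReal.ofReal_le_ofReal hp)
      (h1.1.smul hm).aestronglyMeasurable
  have B : amalgamNorm q r₂ ϑ₂ (fourierT f) ≤ amalgamNorm q r₁ ϑ₂ (fourierT f) :=
    aux_lr _ r₁ r₂ (by linarith) hr
  refine ⟨⟨⟨hm, A.trans_lt hfin⟩, hm', B.trans_lt hfin'⟩, ?_⟩
  rw [ENNReal.ofReal_one, one_mul]
  exact add_le_add A B
end
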